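/- arXiv:1804.05559 — 3 statements merged into one kernel-verified Lean document; each statement's English description precedes it below -/
import Mathlib

section
/- Let n ≥ 7 be an integer and let A_{ikjl} and B_{ij} (1 ≤ i,j,k,l ≤ n-1) be real constants satisfying A_{ikjl} = -A_{kijl} and A_{ikjl} = -A_{iklj} for all indices, Σ_{i,k=1}^{n-1} A_{ikik} = 0, and Σ_{i=1}^{n-1} B_{ii} = 0. Then there exist a constant C > 0 and a C² function v on the closed upper half-space {(z,t) : z ∈ ℝ^{n-1}, t ≥ 0} such that: (1) -Δv(y) = f_{A,B}(y) for all y ∈ ℝ^n_+; (2) ∂v/∂t(z,0) = -n · U(z,0)^{2/(n-2)} · v(z,0) for all z ∈ ℝ^{n-1}; (3) |v(y)| ≤ C(1+|y|)^{4-n}, |∇v(y)| ≤ C(1+|y|)^{3-n} and |∇²v(y)| ≤ C(1+|y|)^{2-n} for all y in the closed half-space; (4) ∫_{ℝ^{n-1}} U(z,0)^{n/(n-2)} v(z,0) dz = 0; and (5) ∫_{ℝ^n_+} v(y) Δv(y) dy ≤ 0. -/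
open MeasureTheory

noncomputable section

/-- Points of the upper half-space: a pair `(z, t)` with `z ∈ ℝ^{n-1}`, `t ∈ ℝ`. -/
abbrev Pt (n : ℕ) := EuclideanSpace ℝ (Fin (n - 1)) × ℝ

/-- The standard bubble `U(z,t) = ((1+t)^2 + |z|^2)^{-(n-2)/2}`. -/
def stdBubble (n : ℕ) (p : Pt n) : ℝ :=
  ((1 + p.2) ^ 2 + ‖p.1‖ ^ 2) ^ (-(((n : ℝ) - 2) / 2))

/-- Directional (partial) derivative of `f` at `x` in the direction `v`. -/
def pd {E : Type*} [NormedAddCommGroup E] [NormedSpace ℝ E]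
    (v : E) (f : E → ℝ) (x : E) : ℝ :=
  fderiv ℝ f x v

/-- The `i`-th horizontal coordinate direction. -/
def ez (n : ℕ) (i : Fin (n - 1)) : Pt n := (EuclideanSpace.single i 1, 0)

/-- The vertical (`t`) coordinate direction. -/
def et (n : ℕ) : Pt n := (0, 1)

/-- The Euclidean Laplacian `Δf = Σ_i ∂²f/∂z_i² + ∂²f/∂t²`. -/
def lap (n : ℕ) (f : Pt n → ℝ) (p : Pt n) : ℝ :=
  (∑ i : Fin (n - 1), pd (ez n i) (pd (ez n i) f) p) + pd (et n) (pd (et n) f) p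

/-- The open upper half-space. -/
def upperHalf (n : ℕ) : Set (Pt n) := {p | 0 < p.2}

/-- The closed upper half-space. -/
def closedHalf (n : ℕ) : Set (Pt n) := {p | 0 ≤ p.2}

/-- The Euclidean length `|y| = sqrt(|z|² + t²)` of `y = (z,t)`. -/
def nrm (n : ℕ) (p : Pt n) : ℝ := Real.sqrt (‖p.1‖ ^ 2 + p.2 ^ 2)

/-- `f_{A,B}(y) = Σ_{i,j} ((1/3) Σ_{k,l} A_{ikjl} y_k y_l + B_{ij} y_n²) ∂²U/∂y_i∂y_j`. -/
def fAB (n : ℕ) (A : Fin (n - 1) → Fin (n - 1) → Fin (n - 1) → Fin (n - 1) → ℝ)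
    (B : Fin (n - 1) → Fin (n - 1) → ℝ) (p : Pt n) : ℝ :=
  ∑ i : Fin (n - 1), ∑ j : Fin (n - 1),
    ((1 / 3) * (∑ k : Fin (n - 1), ∑ l : Fin (n - 1), A i k j l * p.1 k * p.1 l) +
        B i j * p.2 ^ 2) *
      pd (ez n i) (pd (ez n j) (stdBubble n)) p

section Helpers
open Filter Topology Set
variable {n : ℕ}



def PP (c x : ℝ) : ℝ := 1 + 2 * c * x + x ^ 2

def Th (a c : ℝ) : ℝ := ∫ x in Ioi (0:ℝ), (PP c x) ^ (-a)

lemma PP_ge {d c x : ℝ} (hd : d ≤ 1) (hc : d - 1 ≤ c) (hx : 0 ≤ x) :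
    d * (1 + x ^ 2) ≤ PP c x := by
  unfold PP
  nlinarith [mul_nonneg (sub_nonneg.2 hc) hx, mul_nonneg (sub_nonneg.2 hd) (sq_nonneg (x - 1))]

lemma PP_pos {c x : ℝ} (hc : -1 < c) (hx : 0 ≤ x) : 0 < PP c x := by
  have h := PP_ge (d := min 1 (c + 1)) (c := c) (x := x) (min_le_left _ _)
    (by linarith [min_le_right 1 (c + 1)]) hx
  have : 0 < min 1 (c + 1) := lt_min one_pos (by linarith)
  have : 0 < min 1 (c+1) * (1 + x ^ 2) := by positivity
  linarith

lemma PP_rpow_le {d c x a : ℝ} (hd0 : 0 < d) (hd : d ≤ 1) (hc : d - 1 ≤ c) (hx : 0 ≤ x)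
    (ha : 0 ≤ a) : PP c x ^ (-a) ≤ d ^ (-a) * (1 + x ^ 2) ^ (-a) := by
  rw [← Real.mul_rpow hd0.le (by positivity)]
  exact Real.rpow_le_rpow_of_nonpos (by positivity) (PP_ge hd hc hx) (by linarith)

lemma int_base {a : ℝ} (ha : 1 ≤ a) :
    IntegrableOn (fun x : ℝ => (1 + x ^ 2) ^ (-a)) (Ioi 0) := by
  have := integrable_rpow_neg_one_add_norm_sq (E := ℝ) (μ := volume) (r := 2 * a)
    (by simp; linarith)
  refine (this.congr (ae_of_all _ fun x => ?_)).integrableOn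
  simp only [Real.norm_eq_abs, sq_abs]
  congr 1; ring

lemma PP_meas (c b : ℝ) : Measurable (fun x => PP c x ^ b) := by
  unfold PP; fun_prop

lemma int_PP {a c : ℝ} (ha : 1 ≤ a) (hc : -1 < c) :
    IntegrableOn (fun x : ℝ => PP c x ^ (-a)) (Ioi 0) := by
  have hd : 0 < min 1 (c + 1) := lt_min one_pos (by linarith)
  refine Integrable.mono' ((int_base ha).const_mul ((min 1 (c+1)) ^ (-a)))
    (PP_meas _ _).aestronglyMeasurable ?_
  filter_upwards [ae_restrict_mem measurableSet_Ioi] with x hx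
  have hx : 0 < x := hx
  rw [Real.norm_of_nonneg (Real.rpow_nonneg (PP_pos hc hx.le).le _)]
  exact PP_rpow_le hd (min_le_left _ _) (by linarith [min_le_right 1 (c + 1)]) hx.le (by linarith)

lemma x_bound {d c x a : ℝ} (hd0 : 0 < d) (hd : d ≤ 1) (hc : d - 1 ≤ c) (hx : 0 ≤ x)
    (ha : 0 ≤ a) : x * PP c x ^ (-a - 1) ≤ d ^ (-a - 1) * (1 + x ^ 2) ^ (-a) := by
  have h := PP_rpow_le (a := a + 1) hd0 hd hc hx (by linarith)
  rw [neg_add'] at h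
  have e : (1 + x ^ 2) ^ (-a) = (1 + x ^ 2) ^ (-a - 1) * (1 + x ^ 2) := by
    rw [Real.rpow_sub_one (by positivity)]; field_simp
  have hp : 0 < d ^ (-a-1) * (1 + x^2) ^ (-a-1) := by positivity
  have hxx : x ≤ 1 + x ^ 2 := by nlinarith [sq_nonneg (x - 1)]
  calc x * PP c x ^ (-a - 1) ≤ x * (d ^ (-a-1) * (1 + x^2) ^ (-a-1)) := by gcongr
    _ ≤ (1 + x^2) * (d ^ (-a-1) * (1 + x^2) ^ (-a-1)) := by gcongr
    _ = _ := by rw [e]; ring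

lemma Th_deriv0 {a c : ℝ} (ha : 1 ≤ a) (hc : -1 < c) :
    IntegrableOn (fun x => -2 * a * (x * PP c x ^ (-a - 1))) (Ioi 0) ∧
    HasDerivAt (Th a) (∫ x in Ioi (0:ℝ), -2 * a * (x * PP c x ^ (-a - 1))) c := by
  set d := min 1 ((c + 1) / 2) with hdd
  have hd : 0 < d := lt_min one_pos (by linarith)
  have hd1 : d ≤ 1 := min_le_left _ _
  have hd2 : d - 1 < c := by linarith [min_le_right 1 ((c + 1) / 2)]
  refine hasDerivAt_integral_of_dominated_loc_of_deriv_le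
    (bound := fun x => 2 * a * (d ^ (-a - 1) * (1 + x ^ 2) ^ (-a))) (s := Ioi (d - 1))
    (F := fun c x => PP c x ^ (-a)) (F' := fun c x => -2 * a * (x * PP c x ^ (-a - 1)))
    (Ioi_mem_nhds hd2) (Eventually.of_forall fun c => (PP_meas _ _).aestronglyMeasurable)
    (int_PP ha hc) ?_ ?_ ?_ ?_
  · exact ((measurable_id.mul (PP_meas _ _)).const_mul _).aestronglyMeasurable
  · filter_upwards [ae_restrict_mem measurableSet_Ioi] with x hx y hy
    have hx : 0 < x := hx
    have hy : d - 1 < y := hy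
    have hp := PP_pos (c := y) (x := x) (by linarith) hx.le
    rw [norm_mul, Real.norm_of_nonneg (r := x * _) (by positivity)]
    have : ‖-2 * a‖ = 2 * a := by rw [Real.norm_eq_abs, abs_of_nonpos] <;> linarith
    rw [this]
    have := x_bound (a := a) hd hd1 hy.le hx.le (by linarith)
    gcongr
  · exact ((int_base ha).const_mul _).const_mul _
  · filter_upwards [ae_restrict_mem measurableSet_Ioi] with x hx y hy
    have hx : 0 < x := hx
    have hy : d - 1 < y := hy
    have hp := PP_pos (c := y) (x := x) (by linarith) hx.le
    have h1 : HasDerivAt (fun c => PP c x) (2 * x) y := by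
      unfold PP
      have := ((((hasDerivAt_id y).const_mul 2).mul_const x).const_add 1).add_const (x ^ 2)
      simpa using this
    have := h1.rpow_const (p := -a) (Or.inl hp.ne')
    exact this.congr_deriv (by ring)

lemma PP_hasDeriv (c x : ℝ) : HasDerivAt (PP c) (2 * (c + x)) x := by
  unfold PP
  have := (((hasDerivAt_id x).const_mul (2 * c)).const_add 1).add (hasDerivAt_pow 2 x)
  exact this.congr_deriv (by simp; ring)

lemma PP_tendsto {c a : ℝ} (ha : 1 ≤ a) (hc : -1 < c) :
    Tendsto (fun x => PP c x ^ (-a)) atTop (𝓝 0) ∧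
    Tendsto (fun x => (x + c) * PP c x ^ (-a)) atTop (𝓝 0) := by
  have key : ∀ x : ℝ, 1 ≤ x → PP c x ^ (-a) ≤ (min 1 (c+1)) ^ (-a) * (x⁻¹) ^ 2 := by
    intro x hx
    have hd : 0 < min 1 (c + 1) := lt_min one_pos (by linarith)
    refine (PP_rpow_le hd (min_le_left _ _) (by linarith [min_le_right 1 (c + 1)])
      (by linarith) (by linarith)).trans ?_
    gcongr
    calc (1 + x ^ 2) ^ (-a) ≤ (1 + x ^ 2) ^ (-1 : ℝ) :=
          Real.rpow_le_rpow_of_exponent_le (by nlinarith) (by linarith)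
      _ = (1 + x ^ 2)⁻¹ := Real.rpow_neg_one _
      _ ≤ (x ^ 2)⁻¹ := by gcongr; linarith
      _ = _ := by rw [inv_pow]
  set K := (min 1 (c+1)) ^ (-a)
  have hi := tendsto_inv_atTop_zero (𝕜 := ℝ)
  constructor
  · refine squeeze_zero' ?_ ?_ (g := fun x => K * (x⁻¹) ^ 2) ?_
    · filter_upwards [eventually_ge_atTop 1] with x hx
      exact Real.rpow_nonneg (PP_pos hc (by linarith)).le _
    · filter_upwards [eventually_ge_atTop 1] with x hx using key x hx
    · simpa using (hi.pow 2).const_mul K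
  · refine squeeze_zero' ?_ ?_ (g := fun x => (x⁻¹ + c * x⁻¹ ^ 2) * K) ?_
    · filter_upwards [eventually_ge_atTop 1] with x hx
      have := Real.rpow_nonneg (PP_pos hc (x := x) (by linarith)).le (-a)
      have : 0 ≤ x + c := by linarith
      positivity
    · filter_upwards [eventually_ge_atTop 1] with x hx
      have : 0 ≤ x + c := by linarith
      calc _ ≤ (x + c) * (K * (x⁻¹) ^ 2) := by gcongr; exact key x hx
        _ = _ := by field_simp
    · simpa using (hi.add ((hi.pow 2).const_mul c)).mul_const K

lemma Th_hasDeriv {a c : ℝ} (ha : 1 ≤ a) (hc : -1 < c) :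
    HasDerivAt (Th a) (2 * a * c * Th (a + 1) c - 1) c := by
  obtain ⟨h1, h2⟩ := Th_deriv0 ha hc
  convert h2 using 1
  have hI := int_PP (a := a + 1) (c := c) (by linarith) hc
  rw [neg_add'] at hI
  have h3 : ∫ x in Ioi (0:ℝ), (-2 * a * (x * PP c x ^ (-a - 1)) +
      (-2 * a * c) * PP c x ^ (-a - 1)) = 0 - PP c 0 ^ (-a) := by
    refine integral_Ioi_of_hasDerivAt_of_tendsto' (f := fun x => PP c x ^ (-a)) ?_
      (h1.add (hI.const_mul (-2 * a * c))) (PP_tendsto ha hc).1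
    intro x hx
    have := (PP_hasDeriv c x).rpow_const (p := -a) (Or.inl (PP_pos hc hx).ne')
    exact this.congr_deriv (by ring)
  rw [integral_add h1 (hI.const_mul _), integral_const_mul (-2 * a * c)] at h3
  have h0 : PP c 0 = 1 := by simp [PP]
  rw [h0, Real.one_rpow] at h3
  unfold Th
  rw [neg_add']
  linarith

lemma Th_red {a c : ℝ} (ha : 1 ≤ a) (hc : -1 < c) :
    2 * a * (1 - c ^ 2) * Th (a + 1) c = (2 * a - 1) * Th a c - c := by
  have h1 := int_PP ha hc
  have hI := int_PP (a := a + 1) (c := c) (by linarith) hc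
  have h3 : ∫ x in Ioi (0:ℝ), ((1 - 2 * a) * PP c x ^ (-a) +
      (2 * a * (1 - c ^ 2)) * PP c x ^ (-(a + 1))) = 0 - (0 + c) * PP c 0 ^ (-a) := by
    refine integral_Ioi_of_hasDerivAt_of_tendsto' (f := fun x => (x + c) * PP c x ^ (-a)) ?_
      ((h1.const_mul _).add (hI.const_mul _)) (PP_tendsto ha hc).2
    intro x hx
    have hp := PP_pos (x := x) hc hx
    have := ((hasDerivAt_id x).add_const c).mul
      ((PP_hasDeriv c x).rpow_const (p := -a) (Or.inl hp.ne'))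
    refine HasDerivAt.congr_deriv this ?_
    have e : PP c x ^ (-a) = PP c x ^ (-a - 1) * PP c x := by
      rw [Real.rpow_sub_one hp.ne']; field_simp
    rw [neg_add', e, id]
    generalize PP c x ^ (-a - 1) = X
    unfold PP
    ring
  rw [integral_add (h1.const_mul _) (hI.const_mul _), integral_const_mul, integral_const_mul] at h3
  have h0 : PP c 0 = 1 := by simp [PP]
  rw [h0, Real.one_rpow] at h3
  unfold Th
  linarith

lemma Th_contDiffOn (k : ℕ) : ∀ {a : ℝ}, 1 ≤ a → ContDiffOn ℝ k (Th a) (Ioi (-1)) := by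
  induction k with
  | zero =>
    intro a ha
    have : ContinuousOn (Th a) (Ioi (-1)) :=
      fun c hc => (Th_hasDeriv ha hc).continuousAt.continuousWithinAt
    simpa [contDiffOn_zero] using this
  | succ k ih =>
    intro a ha
    have := (contDiffOn_succ_iff_deriv_of_isOpen (𝕜 := ℝ) (n := k) (f := Th a)
      (isOpen_Ioi (a := (-1:ℝ)))).2 ⟨fun c hc =>
        (Th_hasDeriv ha hc).differentiableAt.differentiableWithinAt, by simp, ?_⟩
    · exact_mod_cast this
    · refine ContDiffOn.congr (f := fun c => 2 * a * c * Th (a + 1) c - 1) ?_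
        fun c hc => (Th_hasDeriv ha hc).deriv
      have := ih (a := a + 1) (by linarith)
      fun_prop



/-- symbol class -/
def DD (e : ℝ) (f : Pt n → ℝ) : Prop :=
  (∀ p : Pt n, 0 < p.2 → ContDiffAt ℝ 2 f p) ∧
  ∃ C : ℝ, 0 ≤ C ∧ ∀ p : Pt n, 1 ≤ p.2 → ∀ k : ℕ, k ≤ 2 →
    ‖iteratedFDeriv ℝ k f p‖ ≤ C * ‖p‖ ^ (e - k)

lemma one_le_norm {p : Pt n} (hp : 1 ≤ p.2) : 1 ≤ ‖p‖ := by
  have h := norm_snd_le p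
  rw [Real.norm_eq_abs] at h
  linarith [le_abs_self p.2]

lemma isOpen_pos : IsOpen {p : Pt n | 0 < p.2} := isOpen_lt continuous_const continuous_snd

lemma nat2 {k : ℕ} (hk : k ≤ 2) : ((k : ℕ) : WithTop ℕ∞) ≤ 2 := by exact_mod_cast hk

lemma DD.mono {e e' : ℝ} {f : Pt n → ℝ} (h : DD e f) (he : e ≤ e') : DD e' f := by
  obtain ⟨h1, C, hC, h2⟩ := h
  refine ⟨h1, C, hC, fun p hp k hk => (h2 p hp k hk).trans ?_⟩
  gcongr
  exact one_le_norm hp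

lemma DD.add {e : ℝ} {f g : Pt n → ℝ} (hf : DD e f) (hg : DD e g) :
    DD e (fun p => f p + g p) := by
  obtain ⟨f1, C, hC, f2⟩ := hf
  obtain ⟨g1, C', hC', g2⟩ := hg
  refine ⟨fun p hp => (f1 p hp).add (g1 p hp), C + C', by positivity, fun p hp k hk => ?_⟩
  have hp0 : 0 < p.2 := by linarith
  rw [fun_iteratedFDeriv_add_apply ((f1 p hp0).of_le (nat2 hk)) ((g1 p hp0).of_le (nat2 hk))]
  refine (norm_add_le _ _).trans ?_
  rw [add_mul]
  exact add_le_add (f2 p hp k hk) (g2 p hp k hk)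

lemma DD.mul {e e' : ℝ} {f g : Pt n → ℝ} (hf : DD e f) (hg : DD e' g) :
    DD (e + e') (fun p => f p * g p) := by
  obtain ⟨f1, C, hC, f2⟩ := hf
  obtain ⟨g1, C', hC', g2⟩ := hg
  refine ⟨fun p hp => (f1 p hp).mul (g1 p hp), 4 * (C * C'), by positivity,
    fun p hp k hk => ?_⟩
  have hp0 : 0 < p.2 := by linarith
  have hpn : 0 < ‖p‖ := lt_of_lt_of_le one_pos (one_le_norm hp)
  have hpm : p ∈ {p : Pt n | 0 < p.2} := hp0
  have h := norm_iteratedFDerivWithin_mul_le (𝕜 := ℝ) (f := f) (g := g) (N := 2)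
    (s := {p : Pt n | 0 < p.2}) (fun p hp => (f1 p hp).contDiffWithinAt)
    (fun p hp => (g1 p hp).contDiffWithinAt) isOpen_pos.uniqueDiffOn hpm (n := k) (nat2 hk)
  simp only [iteratedFDerivWithin_of_isOpen _ isOpen_pos hpm] at h
  refine h.trans ?_
  have hb : ∀ i ∈ Finset.range (k + 1), (k.choose i : ℝ) * ‖iteratedFDeriv ℝ i f p‖ *
      ‖iteratedFDeriv ℝ (k - i) g p‖ ≤ (k.choose i : ℝ) * (C * C' * ‖p‖ ^ (e + e' - k)) := by
    intro i hi
    have hi : i ≤ k := by simpa [Nat.lt_succ_iff] using hi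
    have a1 := f2 p hp i (by omega)
    have a2 := g2 p hp (k - i) (by omega)
    rw [mul_assoc]
    refine mul_le_mul_of_nonneg_left ?_ (Nat.cast_nonneg _)
    calc _ ≤ (C * ‖p‖ ^ (e - i)) * (C' * ‖p‖ ^ (e' - (k - i : ℕ))) := by gcongr
      _ = _ := by
        rw [mul_mul_mul_comm, ← Real.rpow_add hpn, Nat.cast_sub hi]
        congr 2; ring
  refine (Finset.sum_le_sum hb).trans ?_
  rw [← Finset.sum_mul, ← Nat.cast_sum, Nat.sum_range_choose, mul_assoc 4]
  gcongr
  have : 2 ^ k ≤ 2 ^ 2 := Nat.pow_le_pow_right (by norm_num) hk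
  exact_mod_cast this

lemma DD.of_hom {d : ℝ} {f : Pt n → ℝ} (hc : ∀ p : Pt n, 0 ≤ p.2 → p ≠ 0 → ContDiffAt ℝ 2 f p)
    (hh : ∀ c : ℝ, 0 < c → ∀ p, f (c • p) = c ^ d * f p) : DD d f := by
  refine ⟨fun p hp => hc p hp.le (by rintro rfl; simp at hp), ?_⟩
  have hK : IsCompact (Metric.sphere (0 : Pt n) 1 ∩ {p | 0 ≤ p.2}) :=
    (isCompact_sphere _ _).inter_right (isClosed_le continuous_const continuous_snd)
  have hb : ∀ k : ℕ, ∃ C : ℝ, k ≤ 2 → ∀ p ∈ (Metric.sphere (0 : Pt n) 1 ∩ {p | 0 ≤ p.2}),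
      ‖iteratedFDeriv ℝ k f p‖ ≤ C := by
    intro k
    by_cases hk : k ≤ 2
    · obtain ⟨C, hC⟩ := hK.exists_bound_of_continuousOn (f := iteratedFDeriv ℝ k f) (by
        intro p hp
        have hp0 : p ≠ 0 := by
          rintro rfl; simp at hp
        exact ((hc p hp.2 hp0).continuousAt_iteratedFDeriv (nat2 hk)).continuousWithinAt)
      exact ⟨C, fun _ => hC⟩
    · exact ⟨0, fun h => absurd h hk⟩
  choose M hM using hb
  refine ⟨|M 0| + |M 1| + |M 2|, by positivity, fun p hp k hk => ?_⟩
  have hpn : 0 < ‖p‖ := lt_of_lt_of_le one_pos (one_le_norm hp)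
  have hu : ‖p‖⁻¹ • p ∈ (Metric.sphere (0 : Pt n) 1 ∩ {p | 0 ≤ p.2}) := by
    refine ⟨by simp [norm_smul, hpn.ne'], ?_⟩
    simp only [mem_ofPred_eq, Prod.smul_snd, smul_eq_mul]
    have : 0 < p.2 := by linarith
    positivity
  have hMk : M k ≤ |M 0| + |M 1| + |M 2| := by
    have := le_abs_self (M k)
    interval_cases k <;> linarith [abs_nonneg (M 0), abs_nonneg (M 1), abs_nonneg (M 2)]
  set w : ℝˣ := Units.mk0 (‖p‖⁻¹) (inv_ne_zero hpn.ne')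
  let E : Pt n ≃L[ℝ] Pt n := ContinuousLinearEquiv.smulLeft w
  have hE : ∀ x, E x = ‖p‖⁻¹ • x := fun x => rfl
  have hf : f = (‖p‖ ^ d) • (f ∘ E) := by
    funext x
    simp only [Pi.smul_apply, Function.comp, hE, smul_eq_mul]
    rw [← hh _ hpn, smul_smul, mul_inv_cancel₀ hpn.ne', one_smul]
  have hcd : ContDiffAt ℝ k (f ∘ E) p := by
    refine ContDiffAt.comp p ?_ E.contDiff.contDiffAt
    rw [hE]
    refine (hc _ hu.2 ?_).of_le (nat2 hk)
    intro h0
    have := hu.1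
    rw [h0] at this; simp at this
  have h1 : iteratedFDeriv ℝ k (f ∘ E) p =
      (iteratedFDeriv ℝ k f (E p)).compContinuousLinearMap fun _ => (E : Pt n →L[ℝ] Pt n) := by
    have := E.iteratedFDerivWithin_comp_right f uniqueDiffOn_univ (x := p) (mem_univ _) k
    simpa [iteratedFDerivWithin_univ] using this
  have hEn : ‖(E : Pt n →L[ℝ] Pt n)‖ ≤ ‖p‖⁻¹ := by
    refine ContinuousLinearMap.opNorm_le_bound _ (by positivity) fun x => ?_
    simp [hE, norm_smul]
  rw [hf, iteratedFDeriv_const_smul_apply hcd, norm_smul, h1,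
    Real.norm_of_nonneg (by positivity)]
  have h2 : ‖(iteratedFDeriv ℝ k f (E p)).compContinuousLinearMap
      fun _ => (E : Pt n →L[ℝ] Pt n)‖ ≤ (|M 0| + |M 1| + |M 2|) * (‖p‖⁻¹) ^ k := by
    refine (ContinuousMultilinearMap.norm_compContinuousLinearMap_le _ _).trans ?_
    have a1 := (hM k hk _ hu).trans hMk
    rw [hE]
    simp only [Finset.prod_const, Finset.card_univ, Fintype.card_fin]
    gcongr
  calc _ ≤ ‖p‖ ^ d * ((|M 0| + |M 1| + |M 2|) * (‖p‖⁻¹) ^ k) := by gcongr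
    _ = _ := by
      rw [Real.rpow_sub hpn, Real.rpow_natCast, inv_pow]; field_simp

lemma DD.const (c : ℝ) : DD 0 (fun _ : Pt n => c) :=
  DD.of_hom (fun _ _ _ => contDiffAt_const) (by simp)

lemma DD.const_mul {e : ℝ} {f : Pt n → ℝ} (c : ℝ) (hf : DD e f) :
    DD e (fun p => c * f p) := by
  simpa using (DD.const c).mul hf

lemma DD.zero (e : ℝ) : DD e (fun _ : Pt n => 0) := by
  refine ⟨fun _ _ => contDiffAt_const, 0, le_rfl, fun p _ k _ => ?_⟩
  have : iteratedFDeriv ℝ k (fun _ : Pt n => (0:ℝ)) p = 0 := by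
    have := iteratedFDeriv_fun_zero (𝕜 := ℝ) (E := Pt n) (F := ℝ) (n := k)
    exact congrFun this p
  simp [this]

lemma DD.congr_deg {e e' : ℝ} {f : Pt n → ℝ} (h : DD e f) (he : e = e') : DD e' f := he ▸ h

lemma DD.bound0 {e : ℝ} {f : Pt n → ℝ} (h : DD e f) : ∃ C, 0 ≤ C ∧ ∀ p : Pt n, 1 ≤ p.2 →
    |f p| ≤ C * ‖p‖ ^ e := by
  obtain ⟨_, C, hC, h2⟩ := h
  refine ⟨C, hC, fun p hp => ?_⟩
  simpa using h2 p hp 0 (by norm_num)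

lemma DD.sum {ι : Type*} (s : Finset ι) {e : ℝ} {f : ι → Pt n → ℝ} (h : ∀ i ∈ s, DD e (f i)) :
    DD e (fun p => ∑ i ∈ s, f i p) := by
  classical
  induction s using Finset.induction_on with
  | empty => simpa using DD.zero e
  | insert a s ha ih =>
    simp only [Finset.sum_insert ha]
    exact (h a (by simp)).add (ih fun i hi => h i (by simp [hi]))

/-! base functions -/
def rr (p : Pt n) : ℝ := ‖p.1‖ ^ 2 + p.2 ^ 2

def FF (b : ℝ) (p : Pt n) : ℝ := rr p ^ ((1 - 2 * b) / 2) * Th b (p.2 * rr p ^ (-(1:ℝ)/2))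

lemma rr_nonneg (p : Pt n) : 0 ≤ rr p := by unfold rr; positivity

lemma rr_pos {p : Pt n} (hp : p ≠ 0) : 0 < rr p := by
  refine lt_of_le_of_ne (rr_nonneg p) fun h => hp ?_
  unfold rr at h
  have h1 : ‖p.1‖ = 0 := by nlinarith [sq_nonneg ‖p.1‖, sq_nonneg p.2]
  have h2 : p.2 = 0 := by nlinarith [sq_nonneg ‖p.1‖, sq_nonneg p.2]
  exact Prod.ext (norm_eq_zero.1 h1) h2

lemma rr_pos' {p : Pt n} (hp : 0 < p.2) : 0 < rr p := by unfold rr; positivity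

lemma rr_contDiff : ContDiff ℝ 2 (rr (n := n)) := by
  unfold rr
  exact ((contDiff_norm_sq ℝ).comp contDiff_fst).add (contDiff_snd.pow 2)

lemma rr_smul (c : ℝ) (p : Pt n) : rr (c • p) = c ^ 2 * rr p := by
  simp only [rr, Prod.smul_fst, Prod.smul_snd, norm_smul, Real.norm_eq_abs, smul_eq_mul, mul_pow,
    sq_abs]
  ring

lemma rr_rpow_smul {c : ℝ} (hc : 0 < c) (p : Pt n) (a : ℝ) :
    rr (c • p) ^ a = c ^ (2 * a) * rr p ^ a := by
  rw [rr_smul, Real.mul_rpow (by positivity) (rr_nonneg p), Real.rpow_mul hc.le]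
  norm_num

lemma DD_rr (a : ℝ) : DD (2 * a) (fun p : Pt n => rr p ^ a) :=
  DD.of_hom (fun p _ hp0 => rr_contDiff.contDiffAt.rpow_const_of_ne (rr_pos hp0).ne')
    (fun _ hc p => rr_rpow_smul hc p a)

lemma DD_s : DD 1 (fun p : Pt n => p.2) :=
  DD.of_hom (fun p _ hp0 => contDiff_snd.contDiffAt) (by simp)

lemma DD_q : DD 2 (fun p : Pt n => ‖p.1‖ ^ 2) :=
  DD.of_hom (fun p _ hp0 => ((contDiff_norm_sq ℝ).comp contDiff_fst).contDiffAt) (by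
    intro c hc p
    simp only [Prod.smul_fst, norm_smul, Real.norm_eq_abs, mul_pow, sq_abs]
    norm_num)

lemma DD_z (i : Fin (n-1)) : DD 1 (fun p : Pt n => p.1 i) :=
  DD.of_hom (fun p _ hp0 => by fun_prop) (by simp)

lemma DD_F {b : ℝ} (hb : 1 ≤ b) : DD (1 - 2 * b) (FF b : Pt n → ℝ) := by
  refine DD.of_hom (fun p hp hp0 => ?_) (fun c hc p => ?_)
  · have h1 := rr_pos hp0
    have h2 : ∀ a : ℝ, ContDiffAt ℝ 2 (fun p : Pt n => rr p ^ a) p := fun a =>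
      rr_contDiff.contDiffAt.rpow_const_of_ne h1.ne'
    have h3 : ContDiffAt ℝ 2 (Th b) (p.2 * rr p ^ (-(1:ℝ)/2)) := by
      refine (Th_contDiffOn 2 hb).contDiffAt (Ioi_mem_nhds ?_)
      have : 0 ≤ p.2 * rr p ^ (-(1:ℝ)/2) := by positivity
      linarith
    exact (h2 _).mul (ContDiffAt.comp (g := Th b) (f := fun p : Pt n => p.2 * rr p ^ (-(1:ℝ)/2)) p h3
      (contDiff_snd.contDiffAt.mul (h2 _)))
  · unfold FF
    rw [rr_rpow_smul hc, rr_rpow_smul hc]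
    have : (c • p).2 * (c ^ (2 * (-(1:ℝ) / 2)) * rr p ^ (-(1:ℝ) / 2)) =
        p.2 * rr p ^ (-(1:ℝ) / 2) := by
      have : c ^ (2 * (-(1:ℝ) / 2)) = c⁻¹ := by
        rw [← Real.rpow_neg_one]; norm_num
      rw [this]; simp; field_simp
    rw [this]
    have : 2 * ((1 - 2 * b) / 2) = 1 - 2 * b := by ring
    rw [this]; ring




/-- linear functional with given gradient -/
def LL (a : EuclideanSpace ℝ (Fin (n-1))) (b : ℝ) : Pt n →L[ℝ] ℝ :=
  (innerSL ℝ a).comp (ContinuousLinearMap.fst ℝ _ _) + b • (ContinuousLinearMap.snd ℝ _ _)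

lemma LL_apply (a : EuclideanSpace ℝ (Fin (n-1))) (b : ℝ) (x : Pt n) :
    LL a b x = inner ℝ a x.1 + b * x.2 := by
  simp [LL]

/-- radial derivative predicate -/
def Rad (g gq gs : Pt n → ℝ) : Prop :=
  ∀ p : Pt n, 0 < p.2 → HasFDerivAt g (LL ((2 * gq p) • p.1) (gs p)) p

lemma Rad.add {g gq gs h hq hs : Pt n → ℝ} (hg : Rad g gq gs) (hh : Rad h hq hs) :
    Rad (fun p => g p + h p) (fun p => gq p + hq p) (fun p => gs p + hs p) := by
  intro p hp
  refine ((hg p hp).add (hh p hp)).congr_fderiv ?_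
  ext x <;> simp [LL_apply, inner_smul_left] <;> ring

lemma Rad.mul {g gq gs h hq hs : Pt n → ℝ} (hg : Rad g gq gs) (hh : Rad h hq hs) :
    Rad (fun p => g p * h p) (fun p => gq p * h p + g p * hq p)
      (fun p => gs p * h p + g p * hs p) := by
  intro p hp
  refine ((hg p hp).mul (hh p hp)).congr_fderiv ?_
  ext x <;> simp [LL_apply, inner_smul_left] <;> ring

lemma Rad.const_mul {g gq gs : Pt n → ℝ} (c : ℝ) (hg : Rad g gq gs) :
    Rad (fun p => c * g p) (fun p => c * gq p) (fun p => c * gs p) := by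
  intro p hp
  refine ((hg p hp).const_mul c).congr_fderiv ?_
  ext x <;> simp [LL_apply, inner_smul_left] ; ring

lemma Rad.congr {g gq gs gq' gs' : Pt n → ℝ} (hg : Rad g gq gs)
    (h1 : ∀ p : Pt n, 0 < p.2 → gq p = gq' p) (h2 : ∀ p : Pt n, 0 < p.2 → gs p = gs' p) :
    Rad g gq' gs' := by
  intro p hp
  rw [← h1 p hp, ← h2 p hp]; exact hg p hp

lemma Rad.const (c : ℝ) : Rad (fun _ : Pt n => c) (fun _ => 0) (fun _ => 0) := by
  intro p hp
  refine (hasFDerivAt_const c p).congr_fderiv ?_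
  ext x <;> simp [LL_apply]

lemma Rad_s : Rad (fun p : Pt n => p.2) (fun _ => 0) (fun _ => 1) := by
  intro p hp
  refine (hasFDerivAt_snd).congr_fderiv ?_
  ext x <;> simp [LL_apply]

lemma Rad_q : Rad (fun p : Pt n => ‖p.1‖ ^ 2) (fun _ => 1) (fun _ => 0) := by
  intro p hp
  have h := (hasFDerivAt_fst (𝕜 := ℝ) (p := p)).norm_sq
  refine h.congr_fderiv ?_
  ext x <;> simp [LL_apply, inner_smul_left]

lemma Rad.comp {g gq gs : Pt n → ℝ} {φ φ' : ℝ → ℝ} (hg : Rad g gq gs)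
    (h : ∀ p : Pt n, 0 < p.2 → HasDerivAt φ (φ' (g p)) (g p)) :
    Rad (fun p => φ (g p)) (fun p => φ' (g p) * gq p) (fun p => φ' (g p) * gs p) := by
  intro p hp
  refine ((h p hp).comp_hasFDerivAt p (hg p hp)).congr_fderiv ?_
  ext x <;> simp [LL_apply, inner_smul_left] ; ring

lemma Rad_rr : Rad (rr : Pt n → ℝ) (fun _ => 1) (fun p => 2 * p.2) := by
  have := Rad_q.add (Rad_s.mul (Rad_s (n := n)))
  have h2 : (rr : Pt n → ℝ) = fun p => ‖p.1‖ ^ 2 + p.2 * p.2 := by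
    funext p; simp [rr, sq]
  rw [h2]
  refine this.congr ?_ ?_ <;> intros <;> ring

lemma Rad_rpow (a : ℝ) : Rad (fun p : Pt n => rr p ^ a) (fun p => a * rr p ^ (a - 1))
    (fun p => 2 * a * (p.2 * rr p ^ (a - 1))) := by
  have := Rad_rr.comp (n := n) (φ := fun x => x ^ a) (φ' := fun x => a * x ^ (a-1))
    (fun p hp => Real.hasDerivAt_rpow_const (Or.inl (rr_pos' hp).ne'))
  refine this.congr ?_ ?_ <;> intros <;> ring

lemma FF_red {b : ℝ} (hb : 1 ≤ b) {p : Pt n} (hp : 0 < p.2) :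
    2 * b * ‖p.1‖ ^ 2 * FF (b + 1) p = (2 * b - 1) * FF b p - p.2 * rr p ^ (-b) := by
  have hr := rr_pos' hp
  set c := p.2 * rr p ^ (-(1:ℝ)/2) with hcd
  have hc : -1 < c := by
    have : 0 ≤ c := by positivity
    linarith
  have h := Th_red hb hc
  have e1 : rr p ^ ((1 - 2 * (b+1)) / 2) = rr p ^ ((1 - 2 * b)/2) * (rr p)⁻¹ := by
    rw [← Real.rpow_neg_one, ← Real.rpow_add hr]; congr 1; ring
  have e2 : rr p ^ (-b) = rr p ^ ((1 - 2 * b)/2) * rr p ^ (-(1:ℝ)/2) := by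
    rw [← Real.rpow_add hr]; congr 1; ring
  have e3 : c ^ 2 * rr p = p.2 ^ 2 := by
    rw [hcd, mul_pow, ← Real.rpow_natCast (rr p ^ _), ← Real.rpow_mul hr.le, mul_assoc,
      ← Real.rpow_add_one hr.ne']
    norm_num
  have e4 : ‖p.1‖ ^ 2 * (rr p)⁻¹ = 1 - c ^ 2 := by
    have : ‖p.1‖ ^ 2 = rr p - p.2 ^ 2 := by simp [rr]
    rw [this, ← e3]; field_simp
  unfold FF
  rw [← hcd, e1, e2]
  linear_combination (2 * b * rr p ^ ((1 - 2 * b)/2) * Th (b+1) c) * e4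
    + rr p ^ ((1 - 2 * b)/2) * h - rr p ^ ((1 - 2 * b)/2) * hcd

lemma Rad_F {b : ℝ} (hb : 1 ≤ b) : Rad (FF b : Pt n → ℝ) (fun p => -b * FF (b + 1) p)
    (fun p => - rr p ^ (-b)) := by
  have hcpos : ∀ p : Pt n, 0 < p.2 → -1 < p.2 * rr p ^ (-(1:ℝ)/2) := by
    intro p hp
    have := rr_pos' hp
    have : 0 ≤ p.2 * rr p ^ (-(1:ℝ)/2) := by positivity
    linarith
  have h1 := Rad_s.mul (Rad_rpow (n := n) (-(1:ℝ)/2))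
  have h2 := h1.comp (φ := Th b) (φ' := fun c => 2 * b * c * Th (b + 1) c - 1)
    (fun p hp => Th_hasDeriv hb (hcpos p hp))
  have h3 := (Rad_rpow (n := n) ((1 - 2 * b)/2)).mul h2
  refine h3.congr ?_ ?_
  · intro p hp
    have hr := rr_pos' hp
    have h := Th_red hb (hcpos p hp)
    set c := p.2 * rr p ^ (-(1:ℝ)/2) with hcd
    have e0 : rr p ^ (-(1:ℝ)/2 - 1) = rr p ^ (-(1:ℝ)/2) * (rr p)⁻¹ := by
      rw [Real.rpow_sub_one hr.ne']; rfl
    have e1 : rr p ^ ((1 - 2 * (b+1)) / 2) = rr p ^ ((1 - 2 * b)/2) * (rr p)⁻¹ := by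
      rw [← Real.rpow_neg_one, ← Real.rpow_add hr]; congr 1; ring
    have e2 : rr p ^ ((1 - 2 * b)/2 - 1) = rr p ^ ((1 - 2 * b)/2) * (rr p)⁻¹ := by
      rw [Real.rpow_sub_one hr.ne']; rfl
    simp only [FF]
    rw [← hcd, e0, e1, e2]
    linear_combination (1/2) * (rr p ^ ((1 - 2 * b)/2) * (rr p)⁻¹) * h +
      (rr p ^ ((1 - 2 * b)/2) * (rr p)⁻¹) * (1/2) * (2 * b * c * Th (b+1) c - 1) * hcd
  · intro p hp
    have hr := rr_pos' hp
    have h := Th_red hb (hcpos p hp)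
    set c := p.2 * rr p ^ (-(1:ℝ)/2) with hcd
    have e3 : c ^ 2 * rr p = p.2 ^ 2 := by
      rw [hcd, mul_pow, ← Real.rpow_natCast (rr p ^ _), ← Real.rpow_mul hr.le, mul_assoc,
        ← Real.rpow_add_one hr.ne']
      norm_num
    have e0 : rr p ^ (-(1:ℝ)/2 - 1) = rr p ^ (-(1:ℝ)/2) * (rr p)⁻¹ := by
      rw [Real.rpow_sub_one hr.ne']; rfl
    have e2 : rr p ^ ((1 - 2 * b)/2 - 1) = rr p ^ ((1 - 2 * b)/2) * (rr p)⁻¹ := by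
      rw [Real.rpow_sub_one hr.ne']; rfl
    have e4 : rr p ^ (-b) = rr p ^ ((1 - 2 * b)/2) * rr p ^ (-(1:ℝ)/2) := by
      rw [← Real.rpow_add hr]; congr 1; ring
    have e5 : (rr p)⁻¹ = rr p ^ (-(1:ℝ)/2) * rr p ^ (-(1:ℝ)/2) := by
      rw [← Real.rpow_add hr, ← Real.rpow_neg_one]; norm_num
    rw [e0, e2, e4, e5]
    generalize rr p ^ (-(1:ℝ)/2) = w at *
    generalize rr p ^ ((1 - 2 * b)/2) = X at *
    generalize Th b c = T at *
    generalize Th (b+1) c = T1 at *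
    have : p.2 * w = c := hcd.symm
    linear_combination (-(2*b*T1*c-1) * X * w * (p.2 * w + c) + (1 - 2*b) * X * w * T) * this
      + X * w * c * h

/-! ### 2-jets of radial functions -/

structure Jet (n : ℕ) where
  v : Pt n → ℝ
  q : Pt n → ℝ
  s : Pt n → ℝ
  qq : Pt n → ℝ
  qs : Pt n → ℝ
  ss : Pt n → ℝ

structure Jet.Good (e : ℝ) (J : Jet n) : Prop where
  Dv : DD e J.v
  Dq : DD (e - 2) J.q
  Ds : DD (e - 1) J.s
  Dqq : DD (e - 4) J.qq
  Dqs : DD (e - 3) J.qs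
  Dss : DD (e - 2) J.ss
  Rv : Rad J.v J.q J.s
  Rq : Rad J.q J.qq J.qs
  Rs : Rad J.s J.qs J.ss

def Jet.add (J K : Jet n) : Jet n :=
  ⟨fun p => J.v p + K.v p, fun p => J.q p + K.q p, fun p => J.s p + K.s p,
   fun p => J.qq p + K.qq p, fun p => J.qs p + K.qs p, fun p => J.ss p + K.ss p⟩

def Jet.cmul (c : ℝ) (J : Jet n) : Jet n :=
  ⟨fun p => c * J.v p, fun p => c * J.q p, fun p => c * J.s p,
   fun p => c * J.qq p, fun p => c * J.qs p, fun p => c * J.ss p⟩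

def Jet.mul (J K : Jet n) : Jet n :=
  ⟨fun p => J.v p * K.v p, fun p => J.q p * K.v p + J.v p * K.q p,
   fun p => J.s p * K.v p + J.v p * K.s p,
   fun p => (J.qq p * K.v p + J.q p * K.q p) + (J.q p * K.q p + J.v p * K.qq p),
   fun p => (J.qs p * K.v p + J.q p * K.s p) + (J.s p * K.q p + J.v p * K.qs p),
   fun p => (J.ss p * K.v p + J.s p * K.s p) + (J.s p * K.s p + J.v p * K.ss p)⟩

lemma Jet.Good.mono {e e' : ℝ} {J : Jet n} (h : J.Good e) (he : e ≤ e') : J.Good e' :=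
  ⟨h.Dv.mono he, h.Dq.mono (by linarith), h.Ds.mono (by linarith), h.Dqq.mono (by linarith),
    h.Dqs.mono (by linarith), h.Dss.mono (by linarith), h.Rv, h.Rq, h.Rs⟩

lemma Jet.Good.add {e : ℝ} {J K : Jet n} (h : J.Good e) (k : K.Good e) : (J.add K).Good e :=
  ⟨h.Dv.add k.Dv, h.Dq.add k.Dq, h.Ds.add k.Ds, h.Dqq.add k.Dqq, h.Dqs.add k.Dqs,
    h.Dss.add k.Dss, h.Rv.add k.Rv, h.Rq.add k.Rq, h.Rs.add k.Rs⟩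

lemma Jet.Good.cmul {e : ℝ} {J : Jet n} (c : ℝ) (h : J.Good e) : (J.cmul c).Good e :=
  ⟨h.Dv.const_mul c, h.Dq.const_mul c, h.Ds.const_mul c, h.Dqq.const_mul c, h.Dqs.const_mul c,
    h.Dss.const_mul c, h.Rv.const_mul c, h.Rq.const_mul c, h.Rs.const_mul c⟩

lemma Jet.Good.mul {e e' : ℝ} {J K : Jet n} (h : J.Good e) (k : K.Good e') :
    (J.mul K).Good (e + e') := by
  refine ⟨h.Dv.mul k.Dv, ?_, ?_, ?_, ?_, ?_, h.Rv.mul k.Rv, ?_, ?_⟩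
  · exact ((h.Dq.mul k.Dv).congr_deg (by ring)).add ((h.Dv.mul k.Dq).congr_deg (by ring))
  · exact ((h.Ds.mul k.Dv).congr_deg (by ring)).add ((h.Dv.mul k.Ds).congr_deg (by ring))
  · exact (((h.Dqq.mul k.Dv).congr_deg (by ring)).add ((h.Dq.mul k.Dq).congr_deg (by ring))).add
      (((h.Dq.mul k.Dq).congr_deg (by ring)).add ((h.Dv.mul k.Dqq).congr_deg (by ring)))
  · exact (((h.Dqs.mul k.Dv).congr_deg (by ring)).add ((h.Dq.mul k.Ds).congr_deg (by ring))).add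
      (((h.Ds.mul k.Dq).congr_deg (by ring)).add ((h.Dv.mul k.Dqs).congr_deg (by ring)))
  · exact (((h.Dss.mul k.Dv).congr_deg (by ring)).add ((h.Ds.mul k.Ds).congr_deg (by ring))).add
      (((h.Ds.mul k.Ds).congr_deg (by ring)).add ((h.Dv.mul k.Dss).congr_deg (by ring)))
  · refine ((h.Rq.mul k.Rv).add (h.Rv.mul k.Rq)).congr (fun p _ => rfl) (fun p _ => ?_)
    simp only [Jet.mul]
  · refine ((h.Rs.mul k.Rv).add (h.Rv.mul k.Rs)).congr (fun p _ => ?_) (fun p _ => rfl)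
    simp only [Jet.mul]; ring

def Js : Jet n := ⟨fun p => p.2, fun _ => 0, fun _ => 1, fun _ => 0, fun _ => 0, fun _ => 0⟩
def Jq : Jet n := ⟨fun p => ‖p.1‖ ^ 2, fun _ => 1, fun _ => 0, fun _ => 0, fun _ => 0, fun _ => 0⟩
def Jr (a : ℝ) : Jet n := ⟨fun p => rr p ^ a, fun p => a * rr p ^ (a - 1),
  fun p => 2 * a * (p.2 * rr p ^ (a - 1)), fun p => a * ((a - 1) * rr p ^ (a - 1 - 1)),
  fun p => 2 * a * (p.2 * ((a - 1) * rr p ^ (a - 1 - 1))),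
  fun p => 2 * a * (rr p ^ (a - 1) + p.2 * (2 * (a - 1) * (p.2 * rr p ^ (a - 1 - 1))))⟩
def JF (b : ℝ) : Jet n := ⟨FF b, fun p => -b * FF (b + 1) p, fun p => -1 * rr p ^ (-b),
  fun p => -b * (-(b + 1) * FF (b + 1 + 1) p), fun p => b * rr p ^ (-b - 1),
  fun p => 2 * b * (p.2 * rr p ^ (-b - 1))⟩

lemma good_s : (Js (n := n)).Good 1 :=
  ⟨DD_s, DD.zero _, (DD.const 1).congr_deg (by ring), DD.zero _, DD.zero _, DD.zero _, Rad_s,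
    Rad.const _, Rad.const _⟩
lemma good_q : (Jq (n := n)).Good 2 :=
  ⟨DD_q, (DD.const 1).congr_deg (by ring), DD.zero _, DD.zero _, DD.zero _, DD.zero _, Rad_q,
    Rad.const _, Rad.const _⟩

lemma good_r (a : ℝ) : (Jr (n := n) a).Good (2 * a) := by
  refine ⟨DD_rr a, ?_, ?_, ?_, ?_, ?_, Rad_rpow a, ?_, ?_⟩
  · exact ((DD_rr (a - 1)).const_mul a).congr_deg (by ring)
  · exact ((DD_s.mul (DD_rr (a - 1))).const_mul (2 * a)).congr_deg (by ring)
  · exact (((DD_rr (a - 1 - 1)).const_mul _).const_mul a).congr_deg (by ring)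
  · exact ((DD_s.mul ((DD_rr (a - 1 - 1)).const_mul _)).const_mul (2 * a)).congr_deg (by ring)
  · exact ((((DD_rr (a - 1)).congr_deg (by ring)).add
      ((DD_s.mul ((DD_s.mul (DD_rr (a - 1 - 1))).const_mul _)).congr_deg (by ring))).const_mul
        (2 * a))
  · refine ((Rad_rpow (a - 1)).const_mul a).congr (fun p _ => rfl) (fun p _ => ?_)
    simp only [Jr]; ring
  · refine ((Rad_s.mul (Rad_rpow (a - 1))).const_mul (2 * a)).congr (fun p _ => ?_) (fun p _ => ?_)
    · simp only [Jr]; ring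
    · simp only [Jr]; ring

lemma good_F {b : ℝ} (hb : 1 ≤ b) : (JF (n := n) b).Good (1 - 2 * b) := by
  refine ⟨DD_F hb, ?_, ?_, ?_, ?_, ?_, ?_, ?_, ?_⟩
  · exact ((DD_F (b := b + 1) (by linarith)).const_mul _).congr_deg (by ring)
  · exact ((DD_rr (-b)).const_mul _).congr_deg (by ring)
  · exact (((DD_F (b := b + 1 + 1) (by linarith)).const_mul _).const_mul _).congr_deg (by ring)
  · exact ((DD_rr (-b - 1)).const_mul _).congr_deg (by ring)
  · exact ((DD_s.mul (DD_rr (-b - 1))).const_mul _).congr_deg (by ring)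
  · refine (Rad_F hb).congr (fun p _ => rfl) (fun p _ => by simp [JF])
  · refine ((Rad_F (b := b + 1) (by linarith)).const_mul (-b)).congr (fun p _ => rfl) (fun p _ => ?_)
    simp only [JF]
    rw [neg_add']; ring
  · refine ((Rad_rpow (-b)).const_mul (-1)).congr (fun p _ => ?_) (fun p _ => ?_)
    · simp only [JF]; ring
    · simp only [JF]; ring




def Jc (c : ℝ) : Jet n := ⟨fun _ => c, fun _ => 0, fun _ => 0, fun _ => 0, fun _ => 0, fun _ => 0⟩

lemma good_c (c : ℝ) : (Jc (n := n) c).Good 0 :=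
  ⟨DD.const c, DD.zero _, DD.zero _, DD.zero _, DD.zero _, DD.zero _, Rad.const _,
    Rad.const _, Rad.const _⟩

/-- polynomial factor of the harmonic profile -/
def Jpol : Jet n := ((Jc (2 * (n:ℝ))).add (Js.cmul (-(3 * (n:ℝ) - 2)))).add
  (((Js.mul Js).cmul ((n:ℝ) - 1)).add Jq)

lemma good_pol : (Jpol (n := n)).Good 2 := by
  refine Jet.Good.add (Jet.Good.add ?_ ?_) (Jet.Good.add ?_ ?_)
  · exact (good_c _).mono (by norm_num)
  · exact (good_s.cmul _).mono (by norm_num)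
  · exact ((good_s.mul good_s).cmul _).mono (by norm_num)
  · exact good_q

def Jlin : Jet n := (Jc (3 * (n:ℝ) - 2)).add (Js.cmul (-((n:ℝ) - 2)))

lemma good_lin : (Jlin (n := n)).Good 1 :=
  ((good_c _).mono (by norm_num)).add (good_s.cmul _)

def Jh : Jet n := (((JF (((n:ℝ) + 2) / 2)).mul Jpol).cmul (n:ℝ)).add
  ((Jr (-(n:ℝ) / 2)).mul Jlin)

lemma good_h : (Jh (n := n)).Good (2 - n) := by
  have hn : (0:ℝ) ≤ n := by positivity
  refine Jet.Good.add ?_ ?_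
  · exact (((good_F (by linarith)).mul good_pol).cmul _).mono (by linarith)
  · exact ((good_r _).mul good_lin).mono (by linarith)

def Jphi : Jet n := ((Jr (1 - (n:ℝ) / 2)).add (Jh.cmul (1 / ((n:ℝ) - 1)))).cmul (-(1/12))

lemma good_phi : (Jphi (n := n)).Good (2 - n) :=
  Jet.Good.cmul _ (((good_r _).mono (by linarith)).add (good_h.cmul _))

def Jpsi : Jet n :=
  ((((((Js.mul Js).mul (Jr (-(n:ℝ) / 2))).add ((Jr (1 - (n:ℝ) / 2)).cmul (1/(2 * ((n:ℝ) - 2))))).cmul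
      (((n:ℝ) - 2)/6)).add
    ((Js.mul (Jr (-(n:ℝ) / 2))).cmul (-(((n:ℝ) - 2)/2)))).add
    ((Jr (-(n:ℝ) / 2)).cmul (((n:ℝ) - 2)/2))).add
  (Jh.cmul ((3 - (n:ℝ)) / (12 * ((n:ℝ) - 1))))

lemma good_psi : (Jpsi (n := n)).Good (2 - n) := by
  refine Jet.Good.add (Jet.Good.add (Jet.Good.add (Jet.Good.cmul _ (Jet.Good.add ?_ ?_)) ?_) ?_) ?_
  · exact ((good_s.mul good_s).mul (good_r _)).mono (by linarith)
  · exact ((good_r _).mono (by linarith)).cmul _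
  · exact ((good_s.mul (good_r _)).mono (by linarith)).cmul _
  · exact ((good_r _).mono (by linarith)).cmul _
  · exact good_h.cmul _

/-- reduced Laplacian -/
def Jet.L (J : Jet n) (p : Pt n) : ℝ :=
  4 * ‖p.1‖ ^ 2 * J.qq p + 2 * ((n:ℝ) + 3) * J.q p + J.ss p

lemma Jet.L_add (J K : Jet n) (p : Pt n) : (J.add K).L p = J.L p + K.L p := by
  simp only [Jet.L, Jet.add]; ring
lemma Jet.L_cmul (c : ℝ) (J : Jet n) (p : Pt n) : (J.cmul c).L p = c * J.L p := by
  simp only [Jet.L, Jet.cmul]; ring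

lemma rpow_shift {x : ℝ} (hx : 0 < x) (a b : ℝ) (k : ℕ) (h : a = b + k) : x ^ a = x ^ b * x ^ k := by
  rw [h, Real.rpow_add_natCast hx.ne']

lemma L_h {p : Pt n} (hp : 0 < p.2) : Jh.L p = 0 := by
  have hr := rr_pos' hp
  have hn : (0:ℝ) ≤ n := by positivity
  have r1 := FF_red (b := ((n:ℝ)+2)/2) (by linarith) hp
  have r2 := FF_red (b := ((n:ℝ)+2)/2+1) (by linarith) hp
  simp only [Jet.L, Jh, Jet.add, Jet.cmul, Jet.mul, JF, Jpol, Jlin, Jr, Js, Jq, Jc] at *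
  rw [rpow_shift hr (-(((n:ℝ)+2)/2)) (-(n:ℝ)/2-2) 1 (by push_cast; ring)] at *
  rw [rpow_shift hr (-(((n:ℝ)+2)/2)-1) (-(n:ℝ)/2-2) 0 (by push_cast; ring)] at *
  rw [rpow_shift hr (-(((n:ℝ)+2)/2+1)) (-(n:ℝ)/2-2) 0 (by push_cast; ring)] at r2
  rw [rpow_shift hr (-(n:ℝ)/2) (-(n:ℝ)/2-2) 2 (by push_cast; ring)] at *
  rw [rpow_shift hr (-(n:ℝ)/2-1) (-(n:ℝ)/2-2) 1 (by push_cast; ring)] at *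
  rw [rpow_shift hr (-(n:ℝ)/2-1-1) (-(n:ℝ)/2-2) 0 (by push_cast; ring)] at *
  have hq : ‖p.1‖^2 = rr p - p.2^2 := by simp [rr]
  generalize FF (((n:ℝ)+2)/2) p = F0 at *
  generalize FF (((n:ℝ)+2)/2+1) p = F1 at *
  generalize FF (((n:ℝ)+2)/2+1+1) p = F2 at *
  generalize rr p ^ (-(n:ℝ)/2-2) = w at *
  generalize ‖p.1‖^2 = q at *
  subst hq
  generalize rr p = r at *
  generalize p.2 = s at *
  generalize (n:ℝ) = N at *
  simp only [pow_zero, pow_one, mul_one] at *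
  linear_combination (N * (N+2) * (2*N - (3*N-2)*s + (N-1)*s^2 + (r - s^2))) * r2 - 4 * N * r1

lemma L_phi {p : Pt n} (hp : 0 < p.2) :
    Jphi.L p = ((n:ℝ) - 2) / 3 * rr p ^ (-(n:ℝ)/2) := by
  have hr := rr_pos' hp
  have hq : ‖p.1‖^2 = rr p - p.2^2 := by simp [rr]
  rw [Jphi, Jet.L_cmul, Jet.L_add, Jet.L_cmul, L_h hp]
  simp only [Jet.L, Jr] at *
  rw [rpow_shift hr (-(n:ℝ)/2) (-(n:ℝ)/2-1) 1 (by push_cast; ring)] at *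
  rw [rpow_shift hr (1-(n:ℝ)/2-1) (-(n:ℝ)/2-1) 1 (by push_cast; ring)] at *
  rw [rpow_shift hr (1-(n:ℝ)/2-1-1) (-(n:ℝ)/2-1) 0 (by push_cast; ring)] at *
  rw [hq]
  ring

lemma L_psi (hn : 7 ≤ n) {p : Pt n} (hp : 0 < p.2) :
    Jpsi.L p = - ((n:ℝ) * ((n:ℝ) - 2)) * (p.2 - 1)^2 * rr p ^ (-(n:ℝ)/2 - 1) := by
  have hr := rr_pos' hp
  have hn2 : (n:ℝ) - 2 ≠ 0 := by
    have : (7:ℝ) ≤ n := by exact_mod_cast hn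
    linarith
  have hq : ‖p.1‖^2 = rr p - p.2^2 := by simp [rr]
  rw [Jpsi, Jet.L_add, Jet.L_add, Jet.L_add, Jet.L_cmul, Jet.L_cmul, Jet.L_cmul, Jet.L_add,
    Jet.L_cmul, Jet.L_cmul, L_h hp]
  simp only [Jet.L, Jr, Jet.mul, Js] at *
  rw [rpow_shift hr (-(n:ℝ)/2-1-1) (-(n:ℝ)/2-2) 0 (by push_cast; ring)] at *
  rw [rpow_shift hr (-(n:ℝ)/2) (-(n:ℝ)/2-2) 2 (by push_cast; ring)] at *
  rw [rpow_shift hr (-(n:ℝ)/2-1) (-(n:ℝ)/2-2) 1 (by push_cast; ring)] at *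
  rw [rpow_shift hr (1-(n:ℝ)/2-1) (-(n:ℝ)/2-2) 2 (by push_cast; ring)] at *
  rw [rpow_shift hr (1-(n:ℝ)/2-1-1) (-(n:ℝ)/2-2) 1 (by push_cast; ring)] at *
  rw [hq]
  field_simp
  ring

lemma bd_h {p : Pt n} (hp : p.2 = 1) : rr p * Jh.s p + n * Jh.v p
    = - 2 * ((n:ℝ) - 1) * rr p ^ (1 - (n:ℝ)/2) := by
  have hr := rr_pos' (p := p) (by rw [hp]; norm_num)
  have hq : ‖p.1‖^2 = rr p - 1 := by simp [rr, hp]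
  simp only [Jh, Jet.add, Jet.cmul, Jet.mul, JF, Jpol, Jlin, Jr, Js, Jq, Jc] at *
  rw [rpow_shift hr (-(((n:ℝ)+2)/2)) (-(n:ℝ)/2-1) 0 (by push_cast; ring)] at *
  rw [rpow_shift hr (-(n:ℝ)/2) (-(n:ℝ)/2-1) 1 (by push_cast; ring)] at *
  rw [rpow_shift hr (1-(n:ℝ)/2) (-(n:ℝ)/2-1) 2 (by push_cast; ring)] at *
  rw [hq, hp]
  ring

lemma bd_phi (hn : 7 ≤ n) {p : Pt n} (hp : p.2 = 1) : rr p * Jphi.s p + n * Jphi.v p = 0 := by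
  have hr := rr_pos' (p := p) (by rw [hp]; norm_num)
  have hn1 : (n:ℝ) - 1 ≠ 0 := by
    have : (7:ℝ) ≤ n := by exact_mod_cast hn
    linarith
  have h := bd_h hp
  simp only [Jphi, Jet.add, Jet.cmul, Jr] at *
  rw [rpow_shift hr (1-(n:ℝ)/2) (-(n:ℝ)/2) 1 (by push_cast; ring)] at *
  rw [rpow_shift hr (1-(n:ℝ)/2-1) (-(n:ℝ)/2) 0 (by push_cast; ring)] at *
  rw [hp]
  generalize rr p ^ (-(n:ℝ)/2) = w at *
  field_simp
  linear_combination -h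

lemma bd_psi (hn : 7 ≤ n) {p : Pt n} (hp : p.2 = 1) : rr p * Jpsi.s p + n * Jpsi.v p = 0 := by
  have hr := rr_pos' (p := p) (by rw [hp]; norm_num)
  have hn7 : (7:ℝ) ≤ n := by exact_mod_cast hn
  have hn1 : (n:ℝ) - 1 ≠ 0 := by linarith
  have hn2 : (n:ℝ) - 2 ≠ 0 := by linarith
  have h := bd_h hp
  simp only [Jpsi, Jet.add, Jet.cmul, Jr, Jet.mul, Js] at *
  rw [rpow_shift hr (1-(n:ℝ)/2) (-(n:ℝ)/2-1) 2 (by push_cast; ring)] at *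
  rw [rpow_shift hr (1-(n:ℝ)/2-1) (-(n:ℝ)/2-1) 1 (by push_cast; ring)] at *
  rw [rpow_shift hr (-(n:ℝ)/2) (-(n:ℝ)/2-1) 1 (by push_cast; ring)] at *
  rw [hp]
  generalize rr p ^ (-(n:ℝ)/2-1) = w at *
  field_simp
  linear_combination 12 * (3-(n:ℝ)) * h




abbrev Ez (n : ℕ) := EuclideanSpace ℝ (Fin (n - 1))

def QQ (S : Fin (n-1) → Fin (n-1) → ℝ) (z : Ez n) : ℝ := ∑ i, ∑ j, S i j * z i * z j

def gradQ (S : Fin (n-1) → Fin (n-1) → ℝ) (z : Ez n) : Ez n :=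
  WithLp.toLp 2 (fun i => ∑ j, (S i j + S j i) * z j)

lemma gradQ_apply (S : Fin (n-1) → Fin (n-1) → ℝ) (z : Ez n) (i : Fin (n-1)) :
    gradQ S z i = ∑ j, (S i j + S j i) * z j := rfl

lemma LL_ez (a : Ez n) (b : ℝ) (i : Fin (n-1)) : LL a b (ez n i) = a i := by
  simp [LL_apply, ez, EuclideanSpace.inner_single_right]

lemma LL_et (a : Ez n) (b : ℝ) : LL a b (et n) = b := by
  simp [LL_apply, et]

lemma Rad.pd_ez {g gq gs : Pt n → ℝ} (hg : Rad g gq gs) {p : Pt n} (hp : 0 < p.2)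
    (i : Fin (n-1)) : pd (ez n i) g p = 2 * gq p * p.1 i := by
  rw [pd, (hg p hp).fderiv, LL_ez]; simp

lemma Rad.pd_et {g gq gs : Pt n → ℝ} (hg : Rad g gq gs) {p : Pt n} (hp : 0 < p.2) :
    pd (et n) g p = gs p := by
  rw [pd, (hg p hp).fderiv, LL_et]

lemma hz (i : Fin (n-1)) (p : Pt n) :
    HasFDerivAt (fun p : Pt n => p.1 i) (LL (EuclideanSpace.single i 1) 0) p := by
  have : (fun p : Pt n => p.1 i) = fun p => LL (EuclideanSpace.single i 1) 0 p := by
    funext p; simp [LL_apply, EuclideanSpace.inner_single_left]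
  rw [this]; exact (LL (EuclideanSpace.single i (1:ℝ)) 0).hasFDerivAt

lemma hQ (S : Fin (n-1) → Fin (n-1) → ℝ) (p : Pt n) :
    HasFDerivAt (fun p : Pt n => QQ S p.1) (LL (gradQ S p.1) 0) p := by
  have h : HasFDerivAt (fun p : Pt n => QQ S p.1) _ p := HasFDerivAt.fun_sum (u := Finset.univ)
    (fun i _ => HasFDerivAt.fun_sum (u := Finset.univ)
      (fun j _ => (((hz i p).const_mul (S i j)).mul (hz j p))))
  refine h.congr_fderiv ?_
  ext x
  · simp only [ContinuousLinearMap.comp_apply, ContinuousLinearMap.inl_apply]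
    simp [LL_apply, EuclideanSpace.inner_single_left, PiLp.inner_apply, gradQ, add_mul, Finset.sum_add_distrib,
      mul_add, Finset.mul_sum]
    rw [add_comm]
    congr 1
    · refine Finset.sum_congr rfl fun i _ => Finset.sum_congr rfl fun j _ => by ring
    · rw [Finset.sum_comm]
      refine Finset.sum_congr rfl fun i _ => Finset.sum_congr rfl fun j _ => by ring
  · simp [LL_apply]

lemma gradQ_z (S : Fin (n-1) → Fin (n-1) → ℝ) (z : Ez n) :
    ∑ i, gradQ S z i * z i = 2 * QQ S z := by
  simp only [gradQ_apply, QQ, two_mul, add_mul, Finset.sum_add_distrib, Finset.sum_mul]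
  congr 1
  · refine Finset.sum_congr rfl fun i _ => Finset.sum_congr rfl fun j _ => by ring
  · rw [Finset.sum_comm]

lemma hgradQ (S : Fin (n-1) → Fin (n-1) → ℝ) (i : Fin (n-1)) (p : Pt n) :
    HasFDerivAt (fun p : Pt n => gradQ S p.1 i)
      (LL (WithLp.toLp 2 (fun j => S i j + S j i)) 0) p := by
  have : (fun p : Pt n => gradQ S p.1 i) = fun p => LL (WithLp.toLp 2 (fun j => S i j + S j i)) 0 p := by
    funext p; simp [LL_apply, gradQ_apply, PiLp.inner_apply]
    refine Finset.sum_congr rfl fun j _ => by ring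
  rw [this]; exact (LL _ 0).hasFDerivAt

lemma DD_Q (S : Fin (n-1) → Fin (n-1) → ℝ) : DD 2 (fun p : Pt n => QQ S p.1) := by
  refine DD.sum _ fun i _ => DD.sum _ fun j _ => ?_
  exact (((DD_z i).const_mul (S i j)).mul (DD_z j)).congr_deg (by norm_num)

lemma ev_pos {p : Pt n} (hp : 0 < p.2) : ∀ᶠ x : Pt n in 𝓝 p, 0 < x.2 := isOpen_pos.mem_nhds hp

lemma pd_congr {f g : Pt n → ℝ} {p : Pt n} (v : Pt n) (h : f =ᶠ[𝓝 p] g) : pd v f p = pd v g p := by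
  rw [pd, pd, h.fderiv_eq]

/-- derivative of `Q g` with `g` radial -/
lemma hQg (S : Fin (n-1) → Fin (n-1) → ℝ) {g gq gs : Pt n → ℝ} (hg : Rad g gq gs) {p : Pt n}
    (hp : 0 < p.2) : HasFDerivAt (fun p : Pt n => QQ S p.1 * g p)
      (LL (g p • gradQ S p.1 + (2 * (QQ S p.1 * gq p)) • p.1) (QQ S p.1 * gs p)) p := by
  refine ((hQ S p).mul (hg p hp)).congr_fderiv ?_
  ext x
  · simp [LL_apply, inner_smul_left, inner_add_left]; ring
  · simp [LL_apply]

lemma lap_Qg (hn : 7 ≤ n) (S : Fin (n-1) → Fin (n-1) → ℝ) (hS : ∑ i, S i i = 0) {e : ℝ} {J : Jet n}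
    (hJ : J.Good e) {p : Pt n} (hp : 0 < p.2) :
    lap n (fun p => QQ S p.1 * J.v p) p = QQ S p.1 * J.L p := by
  have h1 : ∀ i, pd (ez n i) (fun p => QQ S p.1 * J.v p) =ᶠ[𝓝 p]
      fun p => J.v p * gradQ S p.1 i + (2 * (QQ S p.1 * J.q p)) * p.1 i := by
    intro i
    filter_upwards [ev_pos hp] with x hx
    rw [pd, (hQg S hJ.Rv hx).fderiv, LL_ez]; simp
  have h2 : pd (et n) (fun p => QQ S p.1 * J.v p) =ᶠ[𝓝 p] fun p => QQ S p.1 * J.s p := by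
    filter_upwards [ev_pos hp] with x hx
    rw [pd, (hQg S hJ.Rv hx).fderiv, LL_et]
  rw [lap]
  have h3 : pd (et n) (pd (et n) (fun p => QQ S p.1 * J.v p)) p = QQ S p.1 * J.ss p := by
    rw [pd_congr _ h2, pd, (hQg S hJ.Rs hp).fderiv, LL_et]
  have h4 : ∀ i, pd (ez n i) (pd (ez n i) (fun p => QQ S p.1 * J.v p)) p =
      2 * J.v p * S i i + 4 * J.q p * (gradQ S p.1 i * p.1 i) + 
       4 * QQ S p.1 * J.qq p * (p.1 i)^2 + 2 * QQ S p.1 * J.q p := by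
    intro i
    rw [pd_congr _ (h1 i), pd]
    have := ((hJ.Rv p hp).mul (hgradQ S i p)).add (((hQg S hJ.Rq hp).const_mul 2).mul (hz i p))
    erw [this.fderiv]
    simp [LL_ez]
    ring
  rw [h3]
  simp only [h4, Finset.sum_add_distrib, ← Finset.mul_sum, gradQ_z, hS]
  have : ‖p.1‖^2 = ∑ i, (p.1 i)^2 := by simp [EuclideanSpace.norm_sq_eq]
  rw [← this, Jet.L]
  simp
  rw [Nat.cast_sub (by omega)]
  push_cast
  ring

lemma stdBubble_eq (n : ℕ) : stdBubble n = fun p => rr (p + et n) ^ (-(((n : ℝ) - 2) / 2)) := by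
  funext p
  simp [stdBubble, rr, et, add_comm]

lemma pd_shift (v a : Pt n) (f : Pt n → ℝ) : pd v (fun p => f (p + a)) = fun p => pd v f (p + a) := by
  funext p
  rw [pd, pd, fderiv_comp_add_right]

lemma pd2_rpow (a : ℝ) (i j : Fin (n-1)) {p : Pt n} (hp : 0 < p.2) :
    pd (ez n i) (pd (ez n j) (fun p => rr p ^ a)) p =
      2 * a * rr p ^ (a-1) * (if i = j then 1 else 0) + 4 * a * (a-1) * rr p ^ (a-1-1) * (p.1 i * p.1 j) := by
  have h1 : pd (ez n j) (fun p => rr p ^ a) =ᶠ[𝓝 p] fun p => 2 * (a * rr p ^ (a-1)) * p.1 j := by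
    filter_upwards [ev_pos hp] with x hx
    rw [(Rad_rpow a).pd_ez hx]
  rw [pd_congr _ h1, pd]
  have := ((((Rad_rpow (n := n) (a-1)) p hp).const_mul a).const_mul 2).mul (hz j p)
  erw [this.fderiv]
  simp [LL_ez, Pi.single_apply]
  split_ifs <;> ring

lemma fAB_eq (A : Fin (n - 1) → Fin (n - 1) → Fin (n - 1) → Fin (n - 1) → ℝ)
    (B : Fin (n - 1) → Fin (n - 1) → ℝ)
    (hA1 : ∀ i k j l, A i k j l = -A k i j l)
    (hB : (∑ i : Fin (n - 1), B i i) = 0) {p : Pt n} (hp : 0 < p.2) :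
    fAB n A B p = -(((n:ℝ) - 2)/3) * rr (p + et n) ^ (-(n:ℝ)/2) * QQ (fun k l => ∑ i, A i k i l) p.1
      + n * (n - 2) * rr (p + et n) ^ (-(n:ℝ)/2-1) * p.2 ^ 2 * QQ B p.1 := by
  have hp' : 0 < (p + et n).2 := by simp [et]; linarith
  have h0 : ∀ i j, pd (ez n i) (pd (ez n j) (stdBubble n)) p = 
     -((n:ℝ)-2) * rr (p + et n) ^ (-(n:ℝ)/2) * (if i = j then 1 else 0) + 
      n * (n-2) * rr (p + et n) ^ (-(n:ℝ)/2-1) * (p.1 i * p.1 j) := by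
    intro i j
    rw [stdBubble_eq, pd_shift _ _ (fun p => rr p ^ (-(((n : ℝ) - 2) / 2))),
      pd_shift _ _ (pd (ez n j) (fun p => rr p ^ (-(((n : ℝ) - 2) / 2))))]
    refine (pd2_rpow _ _ _ hp').trans ?_
    have e1 : (-(((n : ℝ) - 2) / 2)) - 1 = -(n:ℝ)/2 := by ring
    rw [e1]
    simp [et]
    ring
  rw [fAB]
  simp only [h0]
  set α := rr (p + et n) ^ (-(n:ℝ)/2)
  set β := rr (p + et n) ^ (-(n:ℝ)/2-1)
  have hM : ∑ i, ∑ j, ∑ k, ∑ l, A i k j l * p.1 k * p.1 l * (p.1 i * p.1 j) = 0 := by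
    have : ∑ i, ∑ j, ∑ k, ∑ l, A i k j l * p.1 k * p.1 l * (p.1 i * p.1 j) =
       - ∑ i, ∑ j, ∑ k, ∑ l, A i k j l * p.1 k * p.1 l * (p.1 i * p.1 j) := by
      have e : ∀ f : Fin (n-1) → Fin (n-1) → Fin (n-1) → ℝ, ∑ i, ∑ j, ∑ k, f i j k = ∑ k, ∑ j, ∑ i, f i j k := by
        intro f
        rw [Finset.sum_comm]
        simp_rw [Finset.sum_comm (f := fun a b => f a _ b)]
        rw [Finset.sum_comm]
      conv_lhs => rw [e]
      simp only [← Finset.sum_neg_distrib]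
      refine Finset.sum_congr rfl fun i _ => Finset.sum_congr rfl fun j _ =>
        Finset.sum_congr rfl fun k _ => Finset.sum_congr rfl fun l _ => ?_
      rw [hA1 k i j l]; ring
    linarith
  have hT : ∑ i, ∑ k, ∑ l, A i k i l * p.1 k * p.1 l = QQ (fun k l => ∑ i, A i k i l) p.1 := by
    rw [QQ, Finset.sum_comm]
    refine Finset.sum_congr rfl fun k _ => ?_
    rw [Finset.sum_comm]
    refine Finset.sum_congr rfl fun l _ => ?_
    simp [Finset.sum_mul]
  have e : ∀ i j, ((1 / 3) * (∑ k, ∑ l, A i k j l * p.1 k * p.1 l) + B i j * p.2 ^ 2) *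
      (-((n:ℝ)-2) * α * (if i = j then 1 else 0) + n * (n-2) * β * (p.1 i * p.1 j)) =
      (if i = j then (-((n:ℝ)-2)/3 * α) * (∑ k, ∑ l, A i k i l * p.1 k * p.1 l) + 
         (-((n:ℝ)-2) * α * p.2^2) * B i i else 0) +
      ((n * (n-2) * β/3) * (∑ k, ∑ l, A i k j l * p.1 k * p.1 l * (p.1 i * p.1 j)) + 
        (n * (n-2) * β * p.2^2) * (B i j * p.1 i * p.1 j)) := by
    intro i j
    have : ∑ k, ∑ l, A i k j l * p.1 k * p.1 l * (p.1 i * p.1 j) = 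
      (∑ k, ∑ l, A i k j l * p.1 k * p.1 l) * (p.1 i * p.1 j) := by
      simp only [Finset.sum_mul]
    rw [this]
    split_ifs with h
    · subst h; ring
    · ring
  simp only [e, Finset.sum_add_distrib, Finset.sum_ite_eq, Finset.mem_univ, if_true, ← Finset.mul_sum, hM, hT, hB]
  rw [QQ, QQ]
  ring



def VV (S B : Fin (n-1) → Fin (n-1) → ℝ) (p : Pt n) : ℝ :=
  QQ S p.1 * Jphi.v p + QQ B p.1 * Jpsi.v p

lemma DD_VV (S B : Fin (n-1) → Fin (n-1) → ℝ) : DD (4 - n) (VV S B) :=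
  DD.add (((DD_Q S).mul good_phi.Dv).congr_deg (by ring)) (((DD_Q B).mul good_psi.Dv).congr_deg (by ring))

lemma pd_diff {f : Pt n → ℝ} {p : Pt n} (v : Pt n) (h : ContDiffAt ℝ 2 f p) :
    DifferentiableAt ℝ (pd v f) p := by
  have h1 : ContDiffAt ℝ 1 (fderiv ℝ f) p := h.fderiv_right (by norm_num)
  exact (h1.differentiableAt (by norm_num)).clm_apply (differentiableAt_const v)

lemma pd2_add {f g : Pt n → ℝ} {p : Pt n} (v : Pt n) (hf : ContDiffAt ℝ 2 f p)
    (hg : ContDiffAt ℝ 2 g p) :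
    pd v (pd v (fun x => f x + g x)) p = pd v (pd v f) p + pd v (pd v g) p := by
  have h1 : pd v (fun x => f x + g x) =ᶠ[𝓝 p] fun x => pd v f x + pd v g x := by
    filter_upwards [hf.eventually (by simp), hg.eventually (by simp)] with x hx hy
    rw [pd, fderiv_fun_add (hx.differentiableAt (by norm_num)) (hy.differentiableAt (by norm_num))]
    rfl
  rw [pd_congr _ h1, pd, fderiv_fun_add (pd_diff v hf) (pd_diff v hg)]
  rfl

lemma lap_add {f g : Pt n → ℝ} {p : Pt n} (hf : ContDiffAt ℝ 2 f p)
    (hg : ContDiffAt ℝ 2 g p) : lap n (fun x => f x + g x) p = lap n f p + lap n g p := by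
  simp only [lap, pd2_add _ hf hg, Finset.sum_add_distrib]
  ring

lemma lap_shift (a : Pt n) (f : Pt n → ℝ) (p : Pt n) : lap n (fun p => f (p + a)) p = lap n f (p + a) := by
  simp only [lap]
  congr 1
  · refine Finset.sum_congr rfl fun i _ => ?_
    rw [pd_shift _ _ f, pd_shift _ _ (pd (ez n i) f)]
  · rw [pd_shift _ _ f, pd_shift _ _ (pd (et n) f)]

lemma lap_VV (hn : 7 ≤ n) (S B : Fin (n-1) → Fin (n-1) → ℝ) (hS : ∑ i, S i i = 0) (hB : ∑ i, B i i = 0)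
    {p : Pt n} (hp : 0 < p.2) :
    lap n (VV S B) p = QQ S p.1 * Jphi.L p + QQ B p.1 * Jpsi.L p := by
  have h1 := ((DD_Q S).mul good_phi.Dv).1 p hp
  have h2 := ((DD_Q B).mul good_psi.Dv).1 p hp
  have := lap_add h1 h2
  rw [lap_Qg hn S hS good_phi hp, lap_Qg hn B hB good_psi hp] at this
  exact this

lemma VV_s (S B : Fin (n-1) → Fin (n-1) → ℝ) {p : Pt n} (hp : 0 < p.2) :
    HasFDerivAt (VV S B) (LL ((Jphi.v p • gradQ S p.1 + (2 * (QQ S p.1 * Jphi.q p)) • p.1) +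
      (Jpsi.v p • gradQ B p.1 + (2 * (QQ B p.1 * Jpsi.q p)) • p.1))
      (QQ S p.1 * Jphi.s p + QQ B p.1 * Jpsi.s p)) p := by
  refine ((hQg S good_phi.Rv hp).add (hQg B good_psi.Rv hp)).congr_fderiv ?_
  ext x
  · simp [LL_apply, inner_add_left]
  · simp [LL_apply]

lemma VV_bd (hn : 7 ≤ n) (S B : Fin (n-1) → Fin (n-1) → ℝ) {p : Pt n} (hp : p.2 = 1) :
    QQ S p.1 * Jphi.s p + QQ B p.1 * Jpsi.s p = - n * (rr p)⁻¹ * VV S B p := by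
  have hr := rr_pos' (p := p) (by rw [hp]; norm_num)
  have h1 := bd_phi hn hp
  have h2 := bd_psi hn hp
  rw [VV]
  field_simp
  linear_combination (QQ S p.1) * h1 + QQ B p.1 * h2

lemma eqn1 (hn : 7 ≤ n) (A : Fin (n - 1) → Fin (n - 1) → Fin (n - 1) → Fin (n - 1) → ℝ)
    (B : Fin (n - 1) → Fin (n - 1) → ℝ)
    (hA1 : ∀ i k j l, A i k j l = -A k i j l)
    (hA3 : (∑ i : Fin (n - 1), ∑ k : Fin (n - 1), A i k i k) = 0)
    (hB : (∑ i : Fin (n - 1), B i i) = 0) {p : Pt n} (hp : 0 < p.2) :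
    -(lap n (fun p => VV (fun k l => ∑ i, A i k i l) B (p + et n)) p) = fAB n A B p := by
  have hp' : 0 < (p + et n).2 := by simp [et]; linarith
  rw [lap_shift, fAB_eq A B hA1 hB hp, lap_VV hn _ _ (by rw [Finset.sum_comm]; exact hA3) hB hp',
    L_phi hp', L_psi hn hp']
  simp [et]
  ring

lemma eqn2 (hn : 7 ≤ n) (S B : Fin (n-1) → Fin (n-1) → ℝ) (z : Ez n) :
    derivWithin (fun t : ℝ => VV S B ((z, t) + et n)) (Set.Ici (0 : ℝ)) 0 =
          -(n : ℝ) * (stdBubble n (z, 0)) ^ (2 / ((n : ℝ) - 2)) * VV S B ((z, 0) + et n) := by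
  have hn7 : (7:ℝ) ≤ n := by exact_mod_cast hn
  have hp : ((z, (0:ℝ)) + et n : Pt n).2 = 1 := by simp [et]
  have hr := rr_pos' (p := ((z, (0:ℝ)) + et n : Pt n)) (by rw [hp]; norm_num)
  have h := VV_s S B (p := (z, 0) + et n) (by rw [hp]; norm_num)
  have hc : HasDerivAt (fun t : ℝ => ((z, t) + et n : Pt n)) (et n) 0 := by
    have h1 := (hasDerivAt_const (0:ℝ) z).prodMk (hasDerivAt_id (0:ℝ))
    exact h1.add_const (et n)
  have := (h.comp_hasDerivAt (0:ℝ) hc)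
  rw [LL_et] at this
  have h2 := this.hasDerivWithinAt (s := Ici 0) |>.derivWithin (uniqueDiffOn_Ici 0 0 (by simp))
  refine h2.trans ?_
  rw [VV_bd hn S B hp, stdBubble_eq]
  congr 2
  rw [← Real.rpow_mul hr.le, ← Real.rpow_neg_one]
  congr 1
  field_simp
  rw [div_self]
  linarith

lemma udiff (n : ℕ) : UniqueDiffOn ℝ (closedHalf n) := by
  refine uniqueDiffOn_convex ?_ ?_
  · exact (convex_Ici (0:ℝ)).linear_preimage (LinearMap.snd ℝ _ _)
  · refine ⟨et n, mem_interior.2 ⟨{p | 0 < p.2}, fun p (hp : 0 < p.2) => show 0 ≤ p.2 from hp.le, isOpen_pos, by simp [et]⟩⟩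

lemma shift_le {p : Pt n} (hp : 0 ≤ p.2) : (1 + nrm n p) / 2 ≤ ‖p + et n‖ := by
  have h1 : nrm n p ≤ ‖p.1‖ + p.2 := by
    rw [nrm]
    refine Real.sqrt_le_iff.2 ⟨by positivity, ?_⟩
    nlinarith [norm_nonneg p.1]
  have h2 := norm_fst_le (p + et n)
  have h3 := norm_snd_le (p + et n)
  simp only [et, Prod.fst_add, Prod.snd_add, add_zero, Real.norm_eq_abs] at h2 h3 ⊢
  have := le_abs_self (p.2 + 1)
  linarith

lemma cd_shift {e : ℝ} {f : Pt n → ℝ} (hf : DD e f) {p : Pt n} (hp : 0 ≤ p.2) :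
    ContDiffAt ℝ 2 (fun p => f (p + et n)) p := by
  have := hf.1 (p + et n) (by simp [et]; linarith)
  exact this.comp p (contDiffAt_id.add contDiffAt_const)

lemma decay {e : ℝ} {f : Pt n → ℝ} (hf : DD e f) (he : e ≤ 0) : ∃ C, 0 < C ∧ ∀ p ∈ closedHalf n, ∀ k ≤ 2,
    ‖iteratedFDerivWithin ℝ k (fun p => f (p + et n)) (closedHalf n) p‖ ≤
      C * (1 + nrm n p) ^ (e - k) := by
  obtain ⟨h1, C, hC, h2⟩ := hf
  refine ⟨(C + 1) * 2 ^ (2 - e), by positivity, fun p hp k hk => ?_⟩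
  have hp0 : 0 ≤ p.2 := hp
  rw [iteratedFDerivWithin_eq_iteratedFDeriv (udiff n) ((cd_shift ⟨h1, C, hC, h2⟩ hp).of_le (nat2 hk)) hp,
    iteratedFDeriv_comp_add_right]
  refine (h2 _ (by simp [et]; linarith) k hk).trans ?_
  have hN : 0 ≤ nrm n p := Real.sqrt_nonneg _
  have hk2 : (k:ℝ) ≤ 2 := by exact_mod_cast hk
  have hk0 : (0:ℝ) ≤ k := by positivity
  calc C * ‖p + et n‖ ^ (e - k) ≤ (C+1) * ((1 + nrm n p)/2) ^ (e - k) := by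
        refine mul_le_mul (by linarith) ?_ (by positivity) (by positivity)
        exact Real.rpow_le_rpow_of_nonpos (by positivity) (shift_le hp) (by linarith)
    _ = (C+1) * ((1 + nrm n p) ^ (e - k) * 2 ^ (k - e)) := by
        rw [Real.div_rpow (by positivity) (by norm_num), div_eq_mul_inv, ← Real.rpow_neg (by norm_num), neg_sub]
    _ ≤ (C+1) * ((1 + nrm n p) ^ (e - k) * 2 ^ (2 - e)) := by
        gcongr
        norm_num
    _ = _ := by ring



/-- weak symbol class -/
def D0 (e : ℝ) (f : Pt n → ℝ) : Prop :=
  (∀ p : Pt n, 0 < p.2 → ContinuousAt f p) ∧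
  ∃ C : ℝ, 0 ≤ C ∧ ∀ p : Pt n, 1 ≤ p.2 → |f p| ≤ C * ‖p‖ ^ e

lemma DD.d0 {e : ℝ} {f : Pt n → ℝ} (h : DD e f) : D0 e f :=
  ⟨fun p hp => (h.1 p hp).continuousAt, h.bound0⟩

lemma D0.mul {e e' : ℝ} {f g : Pt n → ℝ} (hf : D0 e f) (hg : D0 e' g) :
    D0 (e + e') (fun p => f p * g p) := by
  obtain ⟨f1, C, hC, f2⟩ := hf
  obtain ⟨g1, D, hD, g2⟩ := hg
  refine ⟨fun p hp => (f1 p hp).mul (g1 p hp), C * D, by positivity, fun p hp => ?_⟩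
  have h1 := one_le_norm hp
  rw [abs_mul, Real.rpow_add (by linarith)]
  calc |f p| * |g p| ≤ (C * ‖p‖ ^ e) * (D * ‖p‖ ^ e') :=
        mul_le_mul (f2 p hp) (g2 p hp) (abs_nonneg _) (by positivity)
    _ = _ := by ring

lemma D0.mono {e e' : ℝ} {f : Pt n → ℝ} (h : D0 e f) (he : e ≤ e') : D0 e' f := by
  obtain ⟨h1, C, hC, h2⟩ := h
  refine ⟨h1, C, hC, fun p hp => (h2 p hp).trans ?_⟩
  gcongr
  exact one_le_norm hp

lemma D0.add {e : ℝ} {f g : Pt n → ℝ} (hf : D0 e f) (hg : D0 e g) :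
    D0 e (fun p => f p + g p) := by
  obtain ⟨f1, C, hC, f2⟩ := hf
  obtain ⟨g1, D, hD, g2⟩ := hg
  refine ⟨fun p hp => (f1 p hp).add (g1 p hp), C + D, by positivity, fun p hp => ?_⟩
  have := abs_add_le (f p) (g p)
  have := f2 p hp
  have := g2 p hp
  rw [add_mul]
  linarith

lemma D0.sum {ι : Type*} (s : Finset ι) {e : ℝ} {f : ι → Pt n → ℝ} (h : ∀ i ∈ s, D0 e (f i)) :
    D0 e (fun p => ∑ i ∈ s, f i p) := by
  classical
  induction s using Finset.induction_on with
  | empty => simpa using (DD.zero e).d0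
  | insert a s ha ih =>
    simp only [Finset.sum_insert ha]
    exact (h a (by simp)).add (ih fun i hi => h i (by simp [hi]))

lemma DD.pd {e : ℝ} {f : Pt n → ℝ} (h : DD e f) (v : Pt n) : D0 (e - 1) (pd v f) := by
  obtain ⟨h1, C, hC, h2⟩ := h
  refine ⟨fun p hp => ?_, C * ‖v‖, by positivity, fun p hp => ?_⟩
  · have := (h1 p hp).fderiv_right (m := 1) (by norm_num)
    exact this.continuousAt.clm_apply continuousAt_const
  · have a1 := h2 p hp 1 (by norm_num)
    rw [norm_iteratedFDeriv_one] at a1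
    have a2 := (fderiv ℝ f p).le_opNorm v
    rw [Real.norm_eq_abs] at a2
    refine a2.trans ?_
    calc _ ≤ (C * ‖p‖ ^ (e - (1:ℕ))) * ‖v‖ := by gcongr
      _ = _ := by push_cast; ring

lemma D0.slice_bound {e : ℝ} {f : Pt n → ℝ} (h : D0 e f) (he : e ≤ 0) : ∃ C, 0 ≤ C ∧ ∀ z : Ez n, ∀ s : ℝ, 1 ≤ s →
    ‖f (z, s)‖ ≤ C * (1 + ‖z‖) ^ e := by
  obtain ⟨C, hC, h2⟩ := h.2
  refine ⟨C * 2 ^ (-e), by positivity, fun z s hs => (h2 (z,s) hs).trans ?_⟩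
  have h1 : (1 + ‖z‖)/2 ≤ ‖((z,s) : Pt n)‖ := by
    have := one_le_norm (p := ((z,s) : Pt n)) hs
    have := norm_fst_le ((z,s) : Pt n)
    simp only at this
    linarith
  calc C * ‖((z,s) : Pt n)‖ ^ e ≤ C * ((1 + ‖z‖)/2) ^ e := by
        gcongr C * ?_
        exact Real.rpow_le_rpow_of_nonpos (by positivity) h1 he
    _ = _ := by
        rw [Real.div_rpow (by positivity) (by norm_num), Real.rpow_neg (by norm_num)]
        ring

lemma D0.cont {e : ℝ} {f : Pt n → ℝ} (h : D0 e f) {p : Pt n} (hp : 0 < p.2) : ContinuousAt f p :=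
  h.1 p hp

lemma D0.slice_cont {e : ℝ} {f : Pt n → ℝ} (h : D0 e f) {s : ℝ} (hs : 1 ≤ s) :
    Continuous (fun z : Ez n => f (z, s)) := by
  refine continuous_iff_continuousAt.2 fun z => ?_
  exact ContinuousAt.comp (f := fun z : Ez n => ((z, s) : Pt n)) (h.cont (by simp; linarith)) (by fun_prop)

lemma D0.slice_int (hn : 7 ≤ n) {e : ℝ} {f : Pt n → ℝ} (h : D0 e f) (he : e < 1 - n) {s : ℝ} (hs : 1 ≤ s) :
    Integrable (fun z : Ez n => f (z, s)) := by
  have hn7 : (7:ℝ) ≤ n := by exact_mod_cast hn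
  obtain ⟨C, hC, h2⟩ := h.slice_bound (by linarith)
  have hi := (integrable_one_add_norm (E := Ez n) (μ := volume) (r := -e) (by
    simp; rw [Nat.cast_sub (by omega)]; push_cast; linarith)).const_mul C
  refine hi.mono' (h.slice_cont hs).aestronglyMeasurable ?_
  refine Eventually.of_forall fun z => ?_
  simpa using h2 z s hs

lemma D0.half_int (hn : 7 ≤ n) {e : ℝ} {f : Pt n → ℝ} (h : D0 e f) (he : e < - n) :
    IntegrableOn (fun p : Pt n => f (p + et n)) (upperHalf n) := by
  have hn7 : (7:ℝ) ≤ n := by exact_mod_cast hn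
  obtain ⟨C, hC, h2⟩ := h.2
  have hm : MeasurableSet (upperHalf n) := isOpen_pos.measurableSet
  have : (volume : Measure (Pt n)).IsAddHaarMeasure := 
    inferInstanceAs (((volume : Measure (Ez n)).prod (volume : Measure ℝ)).IsAddHaarMeasure)
  have hi := ((integrable_one_add_norm (E := Pt n) (μ := volume) (r := -e) (by
    simp; rw [Nat.cast_sub (by omega)]; push_cast; linarith)).const_mul (C * 2 ^ (-e)))
  refine Integrable.mono' hi.integrableOn ?_ ?_
  · refine ContinuousOn.aestronglyMeasurable (fun p hp => ?_) hm
    have hp : 0 < p.2 := hp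
    have hc := h.1 (p + et n) (by simp [et]; linarith)
    exact (ContinuousAt.comp (f := fun p : Pt n => p + et n) hc (by fun_prop)).continuousWithinAt
  · refine (ae_restrict_iff' hm).2 (Eventually.of_forall fun p hp => ?_)
    have hp : 0 < p.2 := hp
    refine (h2 _ (by simp [et]; linarith)).trans ?_
    have h1 : (1 + ‖p‖)/2 ≤ ‖p + et n‖ := by
      have a1 := one_le_norm (p := p + et n) (by simp [et]; linarith)
      have a2 : ‖p‖ ≤ ‖p + et n‖ := by
        rw [Prod.norm_def, Prod.norm_def]
        refine max_le_max (by simp [et]) ?_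
        simp [et]
        rw [abs_of_pos hp, abs_of_pos (by linarith)]; linarith
      linarith
    calc C * ‖p + et n‖ ^ e ≤ C * ((1 + ‖p‖)/2) ^ e := by
          gcongr C * ?_
          exact Real.rpow_le_rpow_of_nonpos (by positivity) h1 (by linarith)
      _ = _ := by
          rw [Real.div_rpow (by positivity) (by norm_num), Real.rpow_neg (by norm_num)]
          simp
          ring

lemma inv_int (T : Ez n ≃ₗᵢ[ℝ] Ez n) (f : Ez n → ℝ) : ∫ z, f (T z) = ∫ z, f z :=
  T.measurePreserving.integral_comp T.toHomeomorph.measurableEmbedding f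

def reflC (i : Fin (n-1)) : Ez n ≃ₗᵢ[ℝ] Ez n :=
  LinearIsometryEquiv.piLpCongrRight 2 (fun k => if k = i then LinearIsometryEquiv.neg ℝ else LinearIsometryEquiv.refl ℝ ℝ)

lemma reflC_apply (i k : Fin (n-1)) (z : Ez n) : reflC i z k = if k = i then - z k else z k := by
  simp [reflC]
  split_ifs <;> simp

def swapC (i j : Fin (n-1)) : Ez n ≃ₗᵢ[ℝ] Ez n := LinearIsometryEquiv.piLpCongrLeft 2 ℝ ℝ (Equiv.swap i j)

lemma swapC_apply (i j : Fin (n-1)) (z : Ez n) : swapC i j z j = z i := by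
  simp [swapC, Equiv.piCongrLeft']

lemma ortho (hn : 7 ≤ n) (S : Fin (n-1) → Fin (n-1) → ℝ) (hS : ∑ i, S i i = 0) (G : Ez n → ℝ)
    (hG : ∀ (T : Ez n ≃ₗᵢ[ℝ] Ez n) z, G (T z) = G z)
    (hI : ∀ i j, Integrable (fun z : Ez n => z i * z j * G z)) : ∫ z, QQ S z * G z = 0 := by
  have h1 : (fun z => QQ S z * G z) = fun z => ∑ i, ∑ j, S i j * (z i * z j * G z) := by
    funext z
    simp only [QQ, Finset.sum_mul]
    refine Finset.sum_congr rfl fun i _ => Finset.sum_congr rfl fun j _ => by ring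
  rw [h1, integral_finsetSum _ fun i _ => integrable_finsetSum _ fun j _ => (hI i j).const_mul _]
  have h2 : ∀ i, ∫ z : Ez n, ∑ j, S i j * (z i * z j * G z) = S i i * ∫ z : Ez n, z i * z i * G z := by
    intro i
    rw [integral_finsetSum _ fun j _ => (hI i j).const_mul _, Finset.sum_eq_single i]
    · rw [integral_const_mul]
    · intro j _ hj
      rw [integral_const_mul]
      have := inv_int (reflC i) (fun z => z i * z j * G z)
      simp only [reflC_apply, hG, if_neg hj, if_true, neg_mul, integral_neg] at this
      have : ∫ z : Ez n, z i * z j * G z = 0 := by linarith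
      rw [this, mul_zero]
    · simp
  have h3 : ∀ i j, ∫ z : Ez n, z i * z i * G z = ∫ z : Ez n, z j * z j * G z := by
    intro i j
    have := inv_int (swapC i j) (fun z => z j * z j * G z)
    simpa only [swapC_apply, hG] using this
  simp only [h2]
  have hpos : 0 < n - 1 := by omega
  simp only [h3 _ ⟨0, hpos⟩]
  rw [← Finset.sum_mul, hS, zero_mul]

lemma rr_inv (T : Ez n ≃ₗᵢ[ℝ] Ez n) (z : Ez n) (s : ℝ) : rr ((T z, s) : Pt n) = rr ((z, s) : Pt n) := by
  simp [rr]
lemma FF_inv (b : ℝ) (T : Ez n ≃ₗᵢ[ℝ] Ez n) (z : Ez n) (s : ℝ) :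
    FF b ((T z, s) : Pt n) = FF b ((z, s) : Pt n) := by
  simp [FF, rr_inv]

lemma phi_inv (T : Ez n ≃ₗᵢ[ℝ] Ez n) (z : Ez n) (s : ℝ) :
    Jphi.v ((T z, s) : Pt n) = Jphi.v ((z, s) : Pt n) := by
  simp [Jphi, Jh, Jet.add, Jet.cmul, Jet.mul, JF, Jpol, Jlin, Jr, Js, Jq, Jc, rr_inv, FF_inv]
lemma psi_inv (T : Ez n ≃ₗᵢ[ℝ] Ez n) (z : Ez n) (s : ℝ) :
    Jpsi.v ((T z, s) : Pt n) = Jpsi.v ((z, s) : Pt n) := by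
  simp [Jpsi, Jh, Jet.add, Jet.cmul, Jet.mul, JF, Jpol, Jlin, Jr, Js, Jq, Jc, rr_inv, FF_inv]

lemma ortho1 (hn : 7 ≤ n) (S : Fin (n-1) → Fin (n-1) → ℝ) (hS : ∑ i, S i i = 0) (g : Pt n → ℝ)
    (hg : DD (2 - n) g) (hi : ∀ (T : Ez n ≃ₗᵢ[ℝ] Ez n) (z : Ez n) (s : ℝ), g (T z, s) = g (z, s)) :
    Integrable (fun z : Ez n => QQ S z * (rr ((z, 1) : Pt n) ^ (-(n:ℝ)/2) * g (z, 1))) ∧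
    ∫ z : Ez n, QQ S z * (rr ((z, 1) : Pt n) ^ (-(n:ℝ)/2) * g (z, 1)) = 0 := by
  have hn7 : (7:ℝ) ≤ n := by exact_mod_cast hn
  have h1 : DD (2 - 2 * n) (fun p : Pt n => rr p ^ (-(n:ℝ)/2) * g p) :=
    ((DD_rr _).mul hg).congr_deg (by ring)
  constructor
  · exact ((DD_Q S).mul h1).d0.slice_int hn (by linarith) le_rfl
  · refine ortho hn S hS _ (fun T z => by rw [rr_inv, hi]) (fun i j => ?_)
    exact (((DD_z i).mul (DD_z j)).mul h1).d0.slice_int hn (by linarith) le_rfl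

lemma eqn4 (hn : 7 ≤ n) (S B : Fin (n-1) → Fin (n-1) → ℝ) (hS : ∑ i, S i i = 0) (hB : ∑ i, B i i = 0) :
    (∫ z : EuclideanSpace ℝ (Fin (n - 1)),
        (stdBubble n (z, 0)) ^ ((n : ℝ) / ((n : ℝ) - 2)) * VV S B ((z, 0) + et n)) = 0 := by
  have hn7 : (7:ℝ) ≤ n := by exact_mod_cast hn
  have a1 := ortho1 hn S hS _ good_phi.Dv phi_inv
  have a2 := ortho1 hn B hB _ good_psi.Dv psi_inv
  have : ∀ z : Ez n, (stdBubble n (z, 0)) ^ ((n : ℝ) / ((n : ℝ) - 2)) * VV S B ((z, 0) + et n) =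
      QQ S z * (rr ((z, 1) : Pt n) ^ (-(n:ℝ)/2) * Jphi.v (z, 1)) + 
      QQ B z * (rr ((z, 1) : Pt n) ^ (-(n:ℝ)/2) * Jpsi.v (z, 1)) := by
    intro z
    have e : ((z, (0:ℝ)) + et n : Pt n) = (z, 1) := by simp [et]
    have hr := rr_pos' (p := ((z, 1) : Pt n)) (by norm_num)
    have e2 : (stdBubble n (z, 0)) ^ ((n : ℝ) / ((n : ℝ) - 2)) = rr ((z, 1) : Pt n) ^ (-(n:ℝ)/2) := by
      rw [stdBubble_eq]
      simp only [e]
      rw [← Real.rpow_mul hr.le]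
      congr 1
      have : (n:ℝ) - 2 ≠ 0 := by linarith
      field_simp
    rw [e2, e, VV]; ring
  simp only [this]
  rw [integral_add a1.1 a2.1, a1.2, a2.2, add_zero]



lemma slice_fderiv {Y : Pt n → ℝ} {z : Ez n} {s : ℝ} (h : DifferentiableAt ℝ Y (z, s)) (i : Fin (n-1)) :
    DifferentiableAt ℝ (fun z : Ez n => Y (z, s)) z ∧
    fderiv ℝ (fun z : Ez n => Y (z, s)) z (EuclideanSpace.single i 1) = pd (ez n i) Y (z, s) := by
  have hc : HasFDerivAt (fun z : Ez n => ((z, s) : Pt n)) (ContinuousLinearMap.inl ℝ (Ez n) ℝ) z :=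
    hasFDerivAt_prodMk_left z s
  have := h.hasFDerivAt.comp z hc
  exact ⟨this.differentiableAt, by
    rw [show (fun z : Ez n => Y (z, s)) = Y ∘ (fun z : Ez n => ((z, s) : Pt n)) from rfl, this.fderiv]
    simp [pd, ez]⟩

lemma DD.diff {e : ℝ} {f : Pt n → ℝ} (h : DD e f) {p : Pt n} (hp : 0 < p.2) : DifferentiableAt ℝ f p :=
  (h.1 p hp).differentiableAt (by norm_num)

lemma divz_D0 {e : ℝ} {Y : Pt n → ℝ} (hY : DD e Y) (i : Fin (n-1)) :
    D0 e (fun p => Y p + p.1 i * pd (ez n i) Y p) :=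
  hY.d0.add (((DD_z i).d0.mul (hY.pd (ez n i))).mono (by linarith))

lemma divz1 (hn : 7 ≤ n) {e : ℝ} {Y : Pt n → ℝ} (hY : DD e Y) (he : e < - n) {s : ℝ} (hs : 1 ≤ s)
    (i : Fin (n-1)) : ∫ z : Ez n, (Y (z,s) + z i * pd (ez n i) Y (z,s)) = 0 := by
  have hd : ∀ z, DifferentiableAt ℝ Y (z, s) := fun z => hY.diff (by simp; linarith)
  have hf : ∀ z : Ez n, HasFDerivAt (fun z : Ez n => z i) (EuclideanSpace.proj i : Ez n →L[ℝ] ℝ) z :=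
    fun z => (EuclideanSpace.proj i : Ez n →L[ℝ] ℝ).hasFDerivAt
  have hf' : ∀ z : Ez n, fderiv ℝ (fun z : Ez n => z i) z (EuclideanSpace.single i 1) = 1 := by
    intro z; rw [(hf z).fderiv]; simp
  have i1 : Integrable (fun z : Ez n => Y (z, s)) := hY.d0.slice_int hn (by linarith) hs
  have i2 : Integrable (fun z : Ez n => z i * pd (ez n i) Y (z, s)) :=
    ((DD_z i).d0.mul (hY.pd (ez n i))).slice_int hn (by linarith) hs
  have i3 : Integrable (fun z : Ez n => z i * Y (z, s)) :=
    ((DD_z i).d0.mul hY.d0).slice_int hn (by linarith) hs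
  have := integral_mul_fderiv_eq_neg_fderiv_mul_of_integrable (μ := (volume : Measure (Ez n)))
    (f := fun z : Ez n => z i) (g := fun z : Ez n => Y (z, s)) (v := EuclideanSpace.single i 1)
    (by simpa [hf'] using i1)
    (by simpa only [(slice_fderiv (hd _) i).2] using i2) i3
    (fun z _ => (hf z).differentiableAt) (fun z _ => (slice_fderiv (hd z) i).1)
  simp only [(slice_fderiv (hd _) i).2, hf', one_mul] at this
  rw [integral_add i1 i2, this]; simp

lemma half_eq : upperHalf n = (univ : Set (Ez n)) ×ˢ Ioi (0:ℝ) := by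
  ext p; simp [upperHalf]

lemma half_meas : (volume : Measure (Pt n)).restrict (upperHalf n) =
    (volume : Measure (Ez n)).prod ((volume : Measure ℝ).restrict (Ioi 0)) := by
  rw [half_eq, show (volume : Measure (Pt n)) = (volume : Measure (Ez n)).prod volume from rfl,
    ← Measure.prod_restrict, Measure.restrict_univ]

lemma divz2 (hn : 7 ≤ n) {e : ℝ} {Y : Pt n → ℝ} (hY : DD e Y) (he : e < - n) (i : Fin (n-1)) :
    ∫ p in upperHalf n, (fun p : Pt n => Y p + p.1 i * pd (ez n i) Y p) (p + et n) = 0 := by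
  have hi := (divz_D0 hY i).half_int hn he
  rw [IntegrableOn, half_meas] at hi
  rw [half_meas, integral_prod_symm _ hi]
  rw [setIntegral_congr_fun (g := fun _ => (0:ℝ)) measurableSet_Ioi]
  · simp
  · intro t ht
    have ht : 0 < t := ht
    simpa [et] using divz1 hn hY he (s := t + 1) (by linarith) i

lemma DX_bound {e : ℝ} {f : Pt n → ℝ} (h : D0 e f) (he : e ≤ 0) : ∃ C, 0 ≤ C ∧ ∀ z : Ez n, ∀ t : ℝ, 0 ≤ t →
    ‖f (z, t + 1)‖ ≤ C * (1 + ‖t‖) ^ e := by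
  obtain ⟨h1, C, hC, h2⟩ := h
  refine ⟨C, hC, fun z t ht => (h2 (z, t+1) (by simp; linarith)).trans ?_⟩
  gcongr C * ?_
  refine Real.rpow_le_rpow_of_nonpos (by positivity) ?_ he
  have := norm_snd_le ((z, t+1) : Pt n)
  simp only [Real.norm_eq_abs] at *
  rw [abs_of_nonneg ht]
  linarith [le_abs_self (t+1)]

lemma divs1 {e : ℝ} {X : Pt n → ℝ} (hX : DD e X) (he : e < - 1) (z : Ez n) :
    ∫ t in Ioi (0:ℝ), pd (et n) X (z, t + 1) = - X (z, 1) := by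
  have hder : ∀ t ∈ Ici (0:ℝ), HasDerivAt (fun t : ℝ => X (z, t + 1)) (pd (et n) X (z, t+1)) t := by
    intro t ht
    have ht : 0 ≤ t := ht
    have h1 := ((hasDerivAt_const t z).prodMk ((hasDerivAt_id t).add_const (1:ℝ)))
    have h2 : HasFDerivAt X (fderiv ℝ X (z, t+1)) (z, t+1) := (hX.diff (by simp; linarith)).hasFDerivAt
    exact h2.comp_hasDerivAt t h1
  obtain ⟨C, hC, hb⟩ := DX_bound (hX.pd (et n)) (by linarith)
  obtain ⟨D, hD, hb2⟩ := DX_bound hX.d0 (by linarith)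
  have hint : IntegrableOn (fun t : ℝ => pd (et n) X (z, t + 1)) (Ioi 0) := by
    have hi := (integrable_one_add_norm (E := ℝ) (μ := volume) (r := -(e-1)) (by
      simp; linarith)).const_mul C
    refine Integrable.mono' hi.integrableOn ?_ ?_
    · refine ContinuousOn.aestronglyMeasurable (fun t ht => ?_) measurableSet_Ioi
      have ht : 0 < t := ht
      have := (hX.pd (et n)).1 (z, t+1) (by simp; linarith)
      exact (ContinuousAt.comp (f := fun t : ℝ => ((z, t+1) : Pt n)) this (by fun_prop)).continuousWithinAt
    · refine (ae_restrict_iff' measurableSet_Ioi).2 (Eventually.of_forall fun t ht => ?_)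
      have ht : 0 < t := ht
      simpa using hb z t ht.le
  have hlim : Tendsto (fun t : ℝ => X (z, t + 1)) atTop (𝓝 0) := by
    have h0 : Tendsto (fun t : ℝ => D * (1 + t) ^ e) atTop (𝓝 0) := by
      have := (tendsto_rpow_neg_atTop (y := -e) (by linarith)).comp (tendsto_atTop_add_const_left atTop (1:ℝ) tendsto_id)
      simpa using this.const_mul D
    refine squeeze_zero_norm' ?_ h0
    filter_upwards [eventually_ge_atTop (0:ℝ)] with t ht
    have := hb2 z t ht
    rwa [Real.norm_eq_abs t, abs_of_nonneg ht] at this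
  have := integral_Ioi_of_hasDerivAt_of_tendsto' hder hint hlim
  simpa using this

lemma divs2 (hn : 7 ≤ n) {e : ℝ} {X : Pt n → ℝ} (hX : DD e X) (he : e - 1 < - n) :
    ∫ p in upperHalf n, pd (et n) X (p + et n) = ∫ z : Ez n, - X (z, 1) := by
  have hn7 : (7:ℝ) ≤ n := by exact_mod_cast hn
  have hi := (hX.pd (et n)).half_int hn he
  rw [IntegrableOn, half_meas] at hi
  rw [half_meas, integral_prod _ hi]
  congr 1
  funext z
  simpa [et] using divs1 hX (by linarith) z

/-- combined directional derivatives -/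
lemma WW (S B : Fin (n-1) → Fin (n-1) → ℝ) {a aq as b bq bs : Pt n → ℝ} (ha : Rad a aq as)
    (hb : Rad b bq bs) {p : Pt n} (hp : 0 < p.2) :
    ∃ f' : Pt n →L[ℝ] ℝ, HasFDerivAt (fun p : Pt n => QQ S p.1 * a p + QQ B p.1 * b p) f' p ∧
     ∑ i, p.1 i * f' (ez n i) = 2 * (QQ S p.1 * a p + QQ B p.1 * b p) + 
        2 * ‖p.1‖^2 * (QQ S p.1 * aq p + QQ B p.1 * bq p) ∧ 
     f' (et n) = QQ S p.1 * as p + QQ B p.1 * bs p := by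
  refine ⟨_, (hQg S ha hp).add (hQg B hb hp), ?_, ?_⟩
  · have e : ∀ i, p.1 i * ((LL (a p • gradQ S p.1 + (2 * (QQ S p.1 * aq p)) • p.1) (QQ S p.1 * as p) +
      LL (b p • gradQ B p.1 + (2 * (QQ B p.1 * bq p)) • p.1) (QQ B p.1 * bs p) : Pt n →L[ℝ] ℝ) (ez n i)) = 
      a p * (gradQ S p.1 i * p.1 i) + b p * (gradQ B p.1 i * p.1 i) + 
      (2 * (QQ S p.1 * aq p) + 2 * (QQ B p.1 * bq p)) * (p.1 i)^2 := by
      intro i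
      simp [LL_ez]; ring
    have : ‖p.1‖^2 = ∑ i, (p.1 i)^2 := by simp [EuclideanSpace.norm_sq_eq]
    simp only [e, Finset.sum_add_distrib, ← Finset.mul_sum, gradQ_z, ← this]
    ring
  · simp [LL_et]

lemma rinv {p : Pt n} (hp : 0 < p.2) : ∃ f' : Pt n →L[ℝ] ℝ, HasFDerivAt (fun p : Pt n => rr p ^ (-1:ℝ)) f' p ∧
     ∑ i, p.1 i * f' (ez n i) = - 2 * ‖p.1‖^2 * ((rr p)⁻¹)^2 ∧ f' (et n) = - 2 * p.2 * ((rr p)⁻¹)^2 := by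
  have hr := rr_pos' hp
  have e : rr p ^ (-1 - 1 : ℝ) = ((rr p)⁻¹)^2 := by
    rw [Real.rpow_sub_one hr.ne', Real.rpow_neg_one]; field_simp
  refine ⟨_, Rad_rpow (-1) p hp, ?_, ?_⟩
  · have : ‖p.1‖^2 = ∑ i, (p.1 i)^2 := by simp [EuclideanSpace.norm_sq_eq]
    rw [this, Finset.mul_sum, Finset.sum_mul]
    refine Finset.sum_congr rfl fun i _ => ?_
    rw [LL_ez]; beta_reduce; rw [e]; simp; ring
  · rw [LL_et]; beta_reduce; rw [e]; ring

section
variable (S B : Fin (n-1) → Fin (n-1) → ℝ)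
def Vq (p : Pt n) : ℝ := QQ S p.1 * Jphi.q p + QQ B p.1 * Jpsi.q p
def Vs (p : Pt n) : ℝ := QQ S p.1 * Jphi.s p + QQ B p.1 * Jpsi.s p
def YY (p : Pt n) : ℝ := VV S B p * Vq S B p + ((n:ℝ)+2)/2 * (VV S B p * VV S B p * rr p ^ (-1:ℝ))
def XX (p : Pt n) : ℝ := VV S B p * Vs S B p + ((n:ℝ)+2) * (p.2 * (VV S B p * VV S B p * rr p ^ (-1:ℝ)))

lemma DD_YY : DD (6 - 2 * n) (YY S B) := by
  refine DD.add ?_ (DD.const_mul _ ?_)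
  · refine ((DD_VV S B).mul (DD.add (e := 2 - n) ?_ ?_)).congr_deg (by ring)
    · exact ((DD_Q S).mul good_phi.Dq).congr_deg (by ring)
    · exact ((DD_Q B).mul good_psi.Dq).congr_deg (by ring)
  · exact (((DD_VV S B).mul (DD_VV S B)).mul (DD_rr (-1))).congr_deg (by ring)

lemma DD_XX : DD (7 - 2 * n) (XX S B) := by
  refine DD.add ?_ (DD.const_mul _ ?_)
  · refine ((DD_VV S B).mul (DD.add (e := 3 - n) ?_ ?_)).congr_deg (by ring)
    · exact ((DD_Q S).mul good_phi.Ds).congr_deg (by ring)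
    · exact ((DD_Q B).mul good_psi.Ds).congr_deg (by ring)
  · exact (DD_s.mul (((DD_VV S B).mul (DD_VV S B)).mul (DD_rr (-1)))).congr_deg (by ring)

lemma key (hn : 7 ≤ n) {p : Pt n} (hp : 0 < p.2) :
    VV S B p * (QQ S p.1 * Jphi.L p + QQ B p.1 * Jpsi.L p) ≤
      2 * ∑ i, (YY S B p + p.1 i * pd (ez n i) (YY S B) p) + pd (et n) (XX S B) p := by
  obtain ⟨v', hv, hv1, hv2⟩ := WW S B good_phi.Rv good_psi.Rv hp
  obtain ⟨q', hq, hq1, hq2⟩ := WW S B good_phi.Rq good_psi.Rq hp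
  obtain ⟨s', hs, hs1, hs2⟩ := WW S B good_phi.Rs good_psi.Rs hp
  obtain ⟨r', hr, hr1, hr2⟩ := rinv hp
  change HasFDerivAt (VV S B) v' p at hv
  change HasFDerivAt (Vq S B) q' p at hq
  change HasFDerivAt (Vs S B) s' p at hs
  have hY : HasFDerivAt (YY S B) _ p := (hv.mul hq).add (((hv.mul hv).mul hr).const_mul (((n:ℝ)+2)/2))
  have hX : HasFDerivAt (XX S B) _ p :=
    (hv.mul hs).add ((HasFDerivAt.mul (hasFDerivAt_snd) ((hv.mul hv).mul hr)).const_mul ((n:ℝ)+2))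
  have hr0 := rr_pos' hp
  have hri : rr p ^ (-1:ℝ) = (rr p)⁻¹ := Real.rpow_neg_one _
  have e1 : ∑ i, p.1 i * pd (ez n i) (YY S B) p = VV S B p * (∑ i, p.1 i * q' (ez n i)) 
      + Vq S B p * (∑ i, p.1 i * v' (ez n i)) + ((n:ℝ)+2)/2 * (2 * VV S B p * (rr p)⁻¹ * 
        (∑ i, p.1 i * v' (ez n i)) + VV S B p ^ 2 * (∑ i, p.1 i * r' (ez n i))) := by
    simp only [Finset.mul_sum, ← Finset.sum_add_distrib]
    refine Finset.sum_congr rfl fun i _ => ?_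
    rw [pd, hY.fderiv]
    simp [hri]
    ring
  have e2 : pd (et n) (XX S B) p = VV S B p * s' (et n) + Vs S B p * v' (et n) +
     ((n:ℝ)+2) * (VV S B p ^ 2 * (rr p)⁻¹ + p.2 * (2 * VV S B p * (rr p)⁻¹ * v' (et n) +
       VV S B p ^ 2 * r' (et n))) := by
    rw [pd, hX.fderiv]
    simp [hri]
    rw [show (et n).2 = 1 from rfl]
    ring
  rw [Finset.sum_add_distrib, e1, e2, hv1, hq1, hr1, hs2, hv2, hr2]
  have hc : ∑ i : Fin (n-1), YY S B p = ((n:ℝ) - 1) * YY S B p := by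
    simp; rw [Nat.cast_sub (by omega)]; simp
  rw [hc]
  simp only [YY, Jet.L, hri]
  change _ ≤ 2 * (((n:ℝ)-1) * _ + (_ * (2 * Vq S B p + _) + _ * (2 * VV S B p + 2 * _ * Vq S B p) + _ * (_ * (2 * VV S B p + 2 * _ * Vq S B p) + _))) + (_ + Vs S B p * Vs S B p + _ * (_ + _ * (_ * Vs S B p + _)))
  have h1 : ‖p.1‖^2 * (rr p)⁻¹ = 1 - p.2^2 * (rr p)⁻¹ := by
    have : ‖p.1‖ ^ 2 = rr p - p.2 ^ 2 := by simp [rr]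
    rw [this]; field_simp
  have h2 : 0 ≤ ‖p.1‖^2 * (Vq S B p + ((n:ℝ)+2)/2 * VV S B p * (rr p)⁻¹)^2 := by positivity
  have h3 : 0 ≤ (Vs S B p + ((n:ℝ)+2) * p.2 * VV S B p * (rr p)⁻¹)^2 := by positivity
  have hVq : Vq S B p = QQ S p.1 * Jphi.q p + QQ B p.1 * Jpsi.q p := rfl
  generalize VV S B p = V at *
  generalize (rr p)⁻¹ = w at *
  generalize Vs S B p = vs at *
  have key : 2 * (((n:ℝ)-1) * (V * Vq S B p + ((n:ℝ)+2)/2 * (V * V * w)) + 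
     (V * (2 * Vq S B p + 2 * ‖p.1‖^2 * (QQ S p.1 * Jphi.qq p + QQ B p.1 * Jpsi.qq p)) + 
      Vq S B p * (2 * V + 2 * ‖p.1‖^2 * Vq S B p) + ((n:ℝ)+2)/2 * (2 * V * w * (2 * V + 2 * ‖p.1‖^2 * Vq S B p)
       + V^2 * (- 2 * ‖p.1‖^2 * w^2)))) + (V * (QQ S p.1 * Jphi.ss p + QQ B p.1 * Jpsi.ss p) + vs * vs
       + ((n:ℝ)+2) * (V^2 * w + p.2 * (2 * V * w * vs + V^2 * (-2 * p.2 * w^2)))) - 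
     V * (QQ S p.1 * (4 * ‖p.1‖^2 * Jphi.qq p + 2 * ((n:ℝ)+3) * Jphi.q p + Jphi.ss p) + 
       QQ B p.1 * (4 * ‖p.1‖^2 * Jpsi.qq p + 2 * ((n:ℝ)+3) * Jpsi.q p + Jpsi.ss p)) = 
     4 * (‖p.1‖^2 * (Vq S B p + ((n:ℝ)+2)/2 * V * w)^2) + (vs + ((n:ℝ)+2) * p.2 * V * w)^2 := by
    rw [hVq]
    linear_combination (-(2 * ((n:ℝ)+2) * V^2 * w + ((n:ℝ)+2)^2 * V^2 * w)) * h1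
  linarith

lemma eqn5 (hn : 7 ≤ n) (hS : ∑ i, S i i = 0) (hB : ∑ i, B i i = 0) :
    (∫ p in upperHalf n, VV S B (p + et n) * lap n (fun p => VV S B (p + et n)) p) ≤ 0 := by
  have hn7 : (7:ℝ) ≤ n := by exact_mod_cast hn
  have hm : MeasurableSet (upperHalf n) := isOpen_pos.measurableSet
  by_cases hI : IntegrableOn (fun p => VV S B (p + et n) * lap n (fun p => VV S B (p + et n)) p) (upperHalf n)
  swap
  · rw [integral_undef hI]
  have iY : ∀ i, IntegrableOn (fun p => (fun p : Pt n => YY S B p + p.1 i * pd (ez n i) (YY S B) p) (p + et n))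
      (upperHalf n) := fun i => (divz_D0 (DD_YY S B) i).half_int hn (by linarith)
  have iX : IntegrableOn (fun p => pd (et n) (XX S B) (p + et n)) (upperHalf n) :=
    ((DD_XX S B).pd (et n)).half_int hn (by linarith)
  have iS : IntegrableOn (fun p => 2 * ∑ i, (fun p : Pt n => YY S B p + p.1 i * pd (ez n i) (YY S B) p) (p + et n))
      (upperHalf n) := (integrable_finsetSum _ fun i _ => iY i).const_mul 2
  have hle : (∫ p in upperHalf n, VV S B (p + et n) * lap n (fun p => VV S B (p + et n)) p) ≤
      ∫ p in upperHalf n, ((2 * ∑ i, (fun p : Pt n => YY S B p + p.1 i * pd (ez n i) (YY S B) p) (p + et n)) +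
        pd (et n) (XX S B) (p + et n)) := by
    refine setIntegral_mono_on hI (iS.add iX) hm fun p hp => ?_
    have hp : 0 < p.2 := hp
    have hp' : 0 < (p + et n).2 := by simp [et]; linarith
    rw [lap_shift, lap_VV hn S B hS hB hp']
    exact key S B hn hp'
  refine hle.trans ?_
  rw [integral_add iS iX, integral_const_mul, integral_finsetSum _ fun i _ => iY i,
    divs2 hn (DD_XX S B) (by linarith)]
  have : ∀ i ∈ (Finset.univ : Finset (Fin (n-1))), _ := fun i _ => divz2 hn (DD_YY S B) (by linarith) i
  rw [Finset.sum_eq_zero this, mul_zero, zero_add]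
  refine integral_nonpos fun z => ?_
  have hr := rr_pos' (p := ((z, 1) : Pt n)) (by norm_num)
  have hb := VV_bd hn S B (p := ((z, 1) : Pt n)) rfl
  have : XX S B (z, 1) = 2 * (VV S B (z,1))^2 * (rr ((z,1) : Pt n))⁻¹ := by
    rw [XX, Vs, hb, Real.rpow_neg_one]; ring
  have h2 : 0 ≤ XX S B (z, 1) := by rw [this]; positivity
  simpa using h2
end

end Helpers

/-- existence of the correction `v = v_q` solving
`-Δv = f_{A,B}` with the linearized boundary condition, with decay estimates,
orthogonality `∫ U^{n/(n-2)} v(·,0) = 0` and the sign condition `∫ v Δv ≤ 0`. -/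
theorem stmt9 (n : ℕ) (hn : 7 ≤ n)
    (A : Fin (n - 1) → Fin (n - 1) → Fin (n - 1) → Fin (n - 1) → ℝ)
    (B : Fin (n - 1) → Fin (n - 1) → ℝ)
    (hA1 : ∀ i k j l, A i k j l = -A k i j l)
    (hA2 : ∀ i k j l, A i k j l = -A i k l j)
    (hA3 : (∑ i : Fin (n - 1), ∑ k : Fin (n - 1), A i k i k) = 0)
    (hB : (∑ i : Fin (n - 1), B i i) = 0) :
    ∃ (C : ℝ) (v : Pt n → ℝ), 0 < C ∧ ContDiffOn ℝ 2 v (closedHalf n) ∧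
      (∀ p : Pt n, 0 < p.2 → -(lap n v p) = fAB n A B p) ∧
      (∀ z : EuclideanSpace ℝ (Fin (n - 1)),
        derivWithin (fun t : ℝ => v (z, t)) (Set.Ici (0 : ℝ)) 0 =
          -(n : ℝ) * (stdBubble n (z, 0)) ^ (2 / ((n : ℝ) - 2)) * v (z, 0)) ∧
      (∀ p ∈ closedHalf n,
        |v p| ≤ C * (1 + nrm n p) ^ ((4 : ℝ) - (n : ℝ)) ∧
        ‖iteratedFDerivWithin ℝ 1 v (closedHalf n) p‖ ≤
          C * (1 + nrm n p) ^ ((3 : ℝ) - (n : ℝ)) ∧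
        ‖iteratedFDerivWithin ℝ 2 v (closedHalf n) p‖ ≤
          C * (1 + nrm n p) ^ ((2 : ℝ) - (n : ℝ))) ∧
      (∫ z : EuclideanSpace ℝ (Fin (n - 1)),
        (stdBubble n (z, 0)) ^ ((n : ℝ) / ((n : ℝ) - 2)) * v (z, 0)) = 0 ∧
      (∫ p in upperHalf n, v p * lap n v p) ≤ 0 := by
  have hn7 : (7:ℝ) ≤ n := by exact_mod_cast hn
  obtain ⟨C, hC, hd⟩ := decay (DD_VV (fun k l => ∑ i, A i k i l) B) (by linarith)
  have hS : ∑ k, ∑ i, A i k i k = 0 := by rw [Finset.sum_comm]; exact hA3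
  refine ⟨C, fun p => VV (fun k l => ∑ i, A i k i l) B (p + et n), hC, ?_, ?_, ?_, ?_, ?_, ?_⟩
  · exact fun p hp => (cd_shift (DD_VV _ _) hp).contDiffWithinAt
  · exact fun p hp => eqn1 hn A B hA1 hA3 hB hp
  · exact fun z => eqn2 hn _ B z
  · intro p hp
    have h0 := hd p hp 0 (by norm_num)
    have h1 := hd p hp 1 (by norm_num)
    have h2 := hd p hp 2 (by norm_num)
    refine ⟨?_, ?_, ?_⟩
    · rw [norm_iteratedFDerivWithin_zero, Real.norm_eq_abs] at h0
      simpa using h0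
    · convert h1 using 3
      push_cast; ring
    · convert h2 using 3
      push_cast; ring
  · exact eqn4 hn _ B hS hB
  · exact eqn5 _ B hn hS hB
end
end

section
/- Let n ≥ 5 be an integer and let A_{ikjl} and B_{ij} (1 ≤ i,j,k,l ≤ n-1) be real constants satisfying A_{ikjl} = -A_{kijl} and A_{ikjl} = -A_{iklj} for all indices, and Σ_{i=1}^{n-1} B_{ii} = 0. Then ∫_{ℝ^n_+} Σ_{i,j=1}^{n-1} ( (1/3) Σ_{k,l=1}^{n-1} A_{ikjl} z_k z_l + B_{ij} t² ) · ∂U/∂z_i (z,t) · ∂U/∂z_j (z,t) dz dt = 0. -/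
open MeasureTheory

noncomputable section

theorem int_zero_of_sum (n : ℕ) (f : Pt n → ℝ) {ι : Type} [Fintype ι] [Nonempty ι]
    (e : ι → (EuclideanSpace ℝ (Fin (n-1)) ≃ₗᵢ[ℝ] EuclideanSpace ℝ (Fin (n-1))))
    (h : ∀ p : Pt n, ∑ a, f (e a p.1, p.2) = 0) : ∫ p in upperHalf n, f p = 0 := by
  by_cases hf : IntegrableOn f (upperHalf n)
  swap
  · exact integral_undef hf
  let g : ι → Pt n → Pt n := fun a => Prod.map (e a) id
  have hg : ∀ a, MeasurePreserving (g a) volume volume := fun a =>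
    (e a).measurePreserving.prod (MeasurePreserving.id volume)
  have hemb : ∀ a, MeasurableEmbedding (g a) := fun a =>
    ((e a).toHomeomorph.prodCongr (Homeomorph.refl ℝ)).measurableEmbedding
  have hpre : ∀ a, g a ⁻¹' upperHalf n = upperHalf n := fun a => by
    ext p; simp [g, upperHalf]
  have h1 : ∀ a, ∫ p in upperHalf n, f (g a p) = ∫ p in upperHalf n, f p := fun a => by
    have := (hg a).setIntegral_preimage_emb (hemb a) f (upperHalf n)
    rwa [hpre] at this
  have h2 : ∀ a, IntegrableOn (fun p => f (g a p)) (upperHalf n) := fun a => by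
    have := ((hg a).integrableOn_comp_preimage (hemb a) (f := f) (s := upperHalf n)).2 hf
    rwa [hpre] at this
  have h3 : ∫ p in upperHalf n, ∑ a, f (g a p) = 0 := by
    have : (fun p => ∑ a, f (g a p)) = fun _ => 0 := by
      ext p; exact h p
    rw [this]; simp
  rw [integral_finsetSum _ (fun a _ => h2 a)] at h3
  simp only [h1, Finset.sum_const, Finset.card_univ, nsmul_eq_mul] at h3
  rcases mul_eq_zero.1 h3 with h4 | h4
  · exact absurd (by exact_mod_cast h4) (Fintype.card_ne_zero (α := ι))
  · exact h4

def sgnIso (m : ℕ) (s : Fin m → ℤˣ) (σ : Equiv.Perm (Fin m)) :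
    EuclideanSpace ℝ (Fin m) ≃ₗᵢ[ℝ] EuclideanSpace ℝ (Fin m) :=
  (LinearIsometryEquiv.piLpCongrLeft 2 ℝ ℝ σ.symm).trans
    (LinearIsometryEquiv.piLpCongrRight 2
      (fun i => if s i = 1 then LinearIsometryEquiv.refl ℝ ℝ else LinearIsometryEquiv.neg ℝ))

theorem sgnIso_apply (m : ℕ) (s : Fin m → ℤˣ) (σ : Equiv.Perm (Fin m))
    (z : EuclideanSpace ℝ (Fin m)) (i : Fin m) :
    sgnIso m s σ z i = ((s i : ℤ) : ℝ) * z (σ i) := by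
  rcases Int.units_eq_one_or (s i) with h | h <;>
  simp [sgnIso, h, LinearIsometryEquiv.piLpCongrLeft_apply, Equiv.piCongrLeft']

theorem sum_sign (m : ℕ) (i j : Fin m) (hij : i ≠ j) :
    ∑ s : Fin m → ℤˣ, ((s i : ℤ) : ℝ) * ((s j : ℤ) : ℝ) = 0 := by
  have h := Fintype.sum_equiv (Equiv.mulRight (Function.update (1 : Fin m → ℤˣ) i (-1)))
    (fun s : Fin m → ℤˣ => -(((s i : ℤ) : ℝ) * ((s j : ℤ) : ℝ)))
    (fun s : Fin m → ℤˣ => ((s i : ℤ) : ℝ) * ((s j : ℤ) : ℝ)) (by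
      intro s
      simp [Function.update_of_ne hij.symm])
  rw [Finset.sum_neg_distrib] at h
  linarith

theorem sum_perm (m : ℕ) (i j : Fin m) (z : EuclideanSpace ℝ (Fin m)) :
    ∑ σ : Equiv.Perm (Fin m), z (σ i) * z (σ i) =
    ∑ σ : Equiv.Perm (Fin m), z (σ j) * z (σ j) :=
  Fintype.sum_equiv (Equiv.mulRight (Equiv.swap i j)) _ _ (by intro σ; simp)

theorem sum_group (m : ℕ) (hm : 0 < m) (B : Fin m → Fin m → ℝ) (hB : ∑ i, B i i = 0)
    (z : EuclideanSpace ℝ (Fin m)) :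
    ∑ a : (Fin m → ℤˣ) × Equiv.Perm (Fin m), ∑ i, ∑ j,
      B i j * (sgnIso m a.1 a.2 z i * sgnIso m a.1 a.2 z j) = 0 := by
  have key : ∀ i j, ∑ a : (Fin m → ℤˣ) × Equiv.Perm (Fin m),
      B i j * (sgnIso m a.1 a.2 z i * sgnIso m a.1 a.2 z j) =
      if i = j then B i j * ((Fintype.card (Fin m → ℤˣ) : ℝ) *
        ∑ σ : Equiv.Perm (Fin m), z (σ ⟨0, hm⟩) * z (σ ⟨0, hm⟩)) else 0 := by
    intro i j
    have h1 : ∑ a : (Fin m → ℤˣ) × Equiv.Perm (Fin m),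
      B i j * (sgnIso m a.1 a.2 z i * sgnIso m a.1 a.2 z j) =
      B i j * ((∑ s : Fin m → ℤˣ, ((s i : ℤ) : ℝ) * ((s j : ℤ) : ℝ)) *
        ∑ σ : Equiv.Perm (Fin m), z (σ i) * z (σ j)) := by
      rw [Finset.sum_mul_sum, ← Finset.mul_sum, Fintype.sum_prod_type]
      congr 1
      refine Finset.sum_congr rfl fun s _ => Finset.sum_congr rfl fun σ _ => ?_
      simp only [sgnIso_apply]; ring
    rw [h1]
    split_ifs with h
    · subst h
      rw [sum_perm m i ⟨0, hm⟩ z]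
      congr 2
      have : ∀ s : Fin m → ℤˣ, ((s i : ℤ) : ℝ) * ((s i : ℤ) : ℝ) = 1 := fun s => by
        rcases Int.units_eq_one_or (s i) with h | h <;> simp [h]
      rw [Finset.sum_congr rfl fun s _ => this s, Finset.sum_const, nsmul_eq_mul, mul_one,
        Finset.card_univ]
    · rw [sum_sign m i j h]; ring
  rw [Finset.sum_comm]
  rw [Finset.sum_congr rfl fun i _ => Finset.sum_comm]
  simp only [key, Finset.sum_ite_eq, Finset.mem_univ, if_true]
  rw [← Finset.sum_mul, hB, zero_mul]

theorem pd_bubble (n : ℕ) (p : Pt n) (hp : 0 < p.2) (i : Fin (n-1)) :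
    pd (ez n i) (stdBubble n) p = (-(((n : ℝ) - 2) / 2) *
      ((1 + p.2) ^ 2 + ‖p.1‖ ^ 2) ^ (-(((n : ℝ) - 2) / 2) - 1) * 2) * p.1 i := by
  have hD : 0 < (1 + p.2) ^ 2 + ‖p.1‖ ^ 2 := by positivity
  have h1 : HasFDerivAt (fun q : Pt n => q.1) (ContinuousLinearMap.fst ℝ _ _) p := hasFDerivAt_fst
  have h2 : HasFDerivAt (fun q : Pt n => q.2) (ContinuousLinearMap.snd ℝ _ _) p := hasFDerivAt_snd
  have h3 := (((h2.const_add 1).pow 2).add h1.norm_sq).rpow_const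
    (p := -(((n : ℝ) - 2) / 2)) (Or.inl hD.ne')
  have h4 : fderiv ℝ (stdBubble n) p = _ := h3.fderiv
  rw [pd, h4]
  simp [ez, EuclideanSpace.inner_single_right]
  ring

theorem A_zero (m : ℕ) (A : Fin m → Fin m → Fin m → Fin m → ℝ)
    (hA1 : ∀ i k j l, A i k j l = -A k i j l) (z : Fin m → ℝ) :
    ∑ i, ∑ j, (∑ k, ∑ l, A i k j l * z k * z l) * (z i * z j) = 0 := by
  have h : ∑ i, ∑ j, (∑ k, ∑ l, A i k j l * z k * z l) * (z i * z j) =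
      ∑ i, ∑ k, ∑ j, ∑ l, A i k j l * z k * z l * (z i * z j) := by
    simp only [Finset.sum_mul]
    exact Finset.sum_congr rfl fun i _ => Finset.sum_comm
  have h2 : ∑ i, ∑ k, ∑ j, ∑ l, A i k j l * z k * z l * (z i * z j) =
      -∑ i, ∑ k, ∑ j, ∑ l, A i k j l * z k * z l * (z i * z j) := by
    conv_lhs => rw [Finset.sum_comm]
    simp only [← Finset.sum_neg_distrib]
    refine Finset.sum_congr rfl fun i _ => Finset.sum_congr rfl fun k _ =>
      Finset.sum_congr rfl fun j _ => Finset.sum_congr rfl fun l _ => ?_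
    rw [hA1]; ring
  rw [h]; linarith

/-- under antisymmetry of `A` and tracelessness of `B`,
`∫_{ℝ^n_+} Σ_{i,j} ((1/3) Σ_{k,l} A_{ikjl} z_k z_l + B_{ij} t²) ∂U/∂z_i ∂U/∂z_j = 0`. -/
theorem stmt10 (n : ℕ) (hn : 5 ≤ n)
    (A : Fin (n - 1) → Fin (n - 1) → Fin (n - 1) → Fin (n - 1) → ℝ)
    (B : Fin (n - 1) → Fin (n - 1) → ℝ)
    (hA1 : ∀ i k j l, A i k j l = -A k i j l)
    (hA2 : ∀ i k j l, A i k j l = -A i k l j)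
    (hB : (∑ i : Fin (n - 1), B i i) = 0) :
    (∫ p in upperHalf n,
      ∑ i : Fin (n - 1), ∑ j : Fin (n - 1),
        ((1 / 3) * (∑ k : Fin (n - 1), ∑ l : Fin (n - 1), A i k j l * p.1 k * p.1 l) +
            B i j * p.2 ^ 2) *
          (pd (ez n i) (stdBubble n) p * pd (ez n j) (stdBubble n) p)) = 0 := by
  let c : ℝ → ℝ → ℝ := fun r t => -(((n : ℝ) - 2) / 2) *
      ((1 + t) ^ 2 + r ^ 2) ^ (-(((n : ℝ) - 2) / 2) - 1) * 2
  have hmeas : MeasurableSet (upperHalf n) :=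
    (isOpen_lt continuous_const continuous_snd).measurableSet
  rw [setIntegral_congr_fun (g := fun p : Pt n => (p.2 ^ 2 * c ‖p.1‖ p.2 ^ 2) *
    ∑ i, ∑ j, B i j * (p.1 i * p.1 j)) hmeas]
  · refine int_zero_of_sum n _ (fun a : (Fin (n-1) → ℤˣ) × Equiv.Perm (Fin (n-1)) =>
      sgnIso (n-1) a.1 a.2) fun p => ?_
    simp only [LinearIsometryEquiv.norm_map]
    rw [← Finset.mul_sum, sum_group (n-1) (by omega) B hB, mul_zero]
  · intro p hp
    have h0 := A_zero (n-1) A hA1 (fun i => p.1 i)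
    have e : ∀ i, pd (ez n i) (stdBubble n) p = c ‖p.1‖ p.2 * p.1 i := pd_bubble n p hp
    simp only [e]
    generalize c ‖p.1‖ p.2 = C
    trans (1 / 3 * C ^ 2) * (∑ i, ∑ j, (∑ k, ∑ l, A i k j l * p.1 k * p.1 l) * (p.1 i * p.1 j)) +
      (p.2 ^ 2 * C ^ 2) * ∑ i, ∑ j, B i j * (p.1 i * p.1 j)
    · rw [Finset.mul_sum, Finset.mul_sum, ← Finset.sum_add_distrib]
      refine Finset.sum_congr rfl fun i _ => ?_
      rw [Finset.mul_sum, Finset.mul_sum, ← Finset.sum_add_distrib]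
      refine Finset.sum_congr rfl fun j _ => ?_
      ring
    · rw [h0]; ring
end
end

section
/- Let n ≥ 5 be an integer, let C > 0, and let v be a C¹ function on the closed upper half-space {(z,t) : z ∈ ℝ^{n-1}, t ≥ 0} satisfying |v(y)| ≤ C(1+|y|)^{4-n} and |∇v(y)| ≤ C(1+|y|)^{3-n} for all y. Then ∫_{ℝ^n_+} ∇U(y) · ∇v(y) dy = (n-2) · ∫_{ℝ^{n-1}} U(z,0)^{n/(n-2)} v(z,0) dz. In particular, if ∫_{ℝ^{n-1}} U(z,0)^{n/(n-2)} v(z,0) dz = 0 then ∫_{ℝ^n_+} ∇U · ∇v dy = 0. -/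
open MeasureTheory

noncomputable section

def Wf (n : ℕ) (p : Pt n) : ℝ := (1 + p.2) ^ 2 + ‖p.1‖ ^ 2

def D1 (n : ℕ) (l : Pt n → ℝ) (p : Pt n) : ℝ :=
  -((n:ℝ)-2) * (l p * (Wf n p) ^ (-((n:ℝ)/2)))

def D2 (n : ℕ) (l : Pt n → ℝ) (p : Pt n) : ℝ :=
  -((n:ℝ)-2) * ((Wf n p) ^ (-((n:ℝ)/2)) - n * (l p)^2 * (Wf n p) ^ (-((n:ℝ)/2) - 1))

structure Dir (n : ℕ) (e : Pt n) (l : Pt n → ℝ) : Prop where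
  ne : ‖e‖ ≤ 1
  hW : ∀ p (s : ℝ), Wf n (p + s • e) = Wf n p + 2 * s * l p + s ^ 2
  hl : ∀ p (s : ℝ), l (p + s • e) = l p + s
  cl : Continuous l
  bl : ∀ p, |l p| ≤ 1 + ‖p‖

lemma dir_et (n : ℕ) : Dir n (et n) (fun p => 1 + p.2) where
  ne := by simp [et]
  hW p s := by simp [et, Wf]; ring
  hl p s := by simp [et]; ring
  cl := by fun_prop
  bl p := by
    have h1 : ‖p.2‖ ≤ ‖p‖ := norm_snd_le p
    have := abs_add_le 1 p.2
    simp only [Real.norm_eq_abs, abs_one] at *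
    linarith

lemma dir_ez (n : ℕ) (i : Fin (n-1)) : Dir n (ez n i) (fun p => p.1 i) where
  ne := by simp [ez]
  hW p s := by
    have := norm_add_sq_real p.1 (s • EuclideanSpace.single i (1:ℝ))
    simp [ez, Wf, this, inner_smul_right, norm_smul, EuclideanSpace.inner_single_right]; ring
  hl p s := by simp [ez]
  cl := by fun_prop
  bl p := by
    have h1 : ‖p.1‖ ≤ ‖p‖ := norm_fst_le p
    have := PiLp.norm_apply_le p.1 i
    simp only [Real.norm_eq_abs] at *
    linarith

lemma Wf_pos {n : ℕ} {p : Pt n} (hp : p ∈ closedHalf n) : 0 < Wf n p := by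
  have : 0 ≤ p.2 := hp
  unfold Wf; positivity

lemma Wf_ge {n : ℕ} {p : Pt n} (hp : p ∈ closedHalf n) : (1+‖p‖)^2/2 ≤ Wf n p := by
  have h : 0 ≤ p.2 := hp
  unfold Wf
  rcases max_choice ‖p.1‖ ‖p.2‖ with h1 | h1
  · rw [Prod.norm_def, h1]; nlinarith [sq_nonneg (1 - ‖p.1‖)]
  · rw [Prod.norm_def, h1, Real.norm_of_nonneg h]; nlinarith [sq_nonneg ‖p.1‖]

lemma Wf_rpow_le {n : ℕ} {p : Pt n} (hp : p ∈ closedHalf n) {a : ℝ} (ha : 0 ≤ a) :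
    (Wf n p) ^ (-a) ≤ 2 ^ a * (1+‖p‖)^(-(2*a)) := by
  have h0 : 0 < 1 + ‖p‖ := by positivity
  calc (Wf n p) ^ (-a) ≤ ((1+‖p‖)^2/2) ^ (-a) :=
        Real.rpow_le_rpow_of_nonpos (by positivity) (Wf_ge hp) (by linarith)
    _ = _ := by
        rw [Real.div_rpow (by positivity) (by norm_num), ← Real.rpow_natCast, ← Real.rpow_mul h0.le,
          Real.rpow_neg (by norm_num : (0:ℝ) ≤ 2), div_inv_eq_mul, mul_comm]
        congr 2; push_cast; ring

section
variable {n : ℕ} {e : Pt n} {l : Pt n → ℝ}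

lemma Dir.line_W (h : Dir n e l) (p : Pt n) :
    HasDerivAt (fun s : ℝ => Wf n (p + s • e)) (2 * l p) 0 := by
  simp only [h.hW]
  have := (((hasDerivAt_id (0:ℝ)).const_mul 2).mul_const (l p)).const_add (Wf n p) |>.add
    ((hasDerivAt_id (0:ℝ)).pow 2)
  exact this.congr_deriv (by simp)

lemma Dir.line_Wr (h : Dir n e l) {p : Pt n} (hp : p ∈ closedHalf n) (a : ℝ) :
    HasDerivAt (fun s : ℝ => Wf n (p + s • e) ^ a) (2 * l p * a * Wf n p ^ (a - 1)) 0 := by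
  have := (h.line_W p).rpow_const (p := a) (Or.inl (by simpa using (Wf_pos hp).ne'))
  simpa using this

lemma Dir.line_U (h : Dir n e l) {p : Pt n} (hp : p ∈ closedHalf n) :
    HasLineDerivAt ℝ (stdBubble n) (D1 n l p) p e := by
  have := h.line_Wr hp (-(((n : ℝ) - 2) / 2))
  unfold HasLineDerivAt
  refine HasDerivAt.congr_deriv this ?_
  unfold D1
  rw [show -(((n : ℝ) - 2) / 2) - 1 = -((n:ℝ)/2) by ring]; ring

lemma Dir.line_D1 (h : Dir n e l) {p : Pt n} (hp : p ∈ closedHalf n) :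
    HasLineDerivAt ℝ (D1 n l) (D2 n l p) p e := by
  have h1 := h.line_Wr hp (-((n : ℝ) / 2))
  have h2 : HasDerivAt (fun s : ℝ => l (p + s • e)) 1 0 := by
    simp only [h.hl]
    exact (hasDerivAt_id (0:ℝ)).const_add _
  have h3 := (h2.mul h1).const_mul (-((n:ℝ)-2))
  unfold HasLineDerivAt
  refine HasDerivAt.congr_deriv h3 ?_
  simp only [D2, zero_smul, add_zero]; ring

lemma diff_U {p : Pt n} (hp : p ∈ closedHalf n) : DifferentiableAt ℝ (stdBubble n) p := by
  have : DifferentiableAt ℝ (Wf n) p := by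
    unfold Wf
    have : DifferentiableAt ℝ (fun p : Pt n => ‖p.1‖^2) p :=
      DifferentiableAt.norm_sq ℝ differentiableAt_fst
    fun_prop
  exact this.rpow_const (Or.inl (Wf_pos hp).ne')

lemma Dir.pd_U (h : Dir n e l) {p : Pt n} (hp : p ∈ closedHalf n) :
    pd e (stdBubble n) p = D1 n l p := by
  unfold pd
  rw [← (diff_U hp).lineDeriv_eq_fderiv]
  exact (h.line_U hp).lineDeriv

lemma cont_W : Continuous (Wf n) := by unfold Wf; fun_prop

lemma Dir.cont_D1 (h : Dir n e l) : ContinuousOn (D1 n l) (closedHalf n) := by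
  unfold D1
  have h1 := h.cl.continuousOn (s := closedHalf n)
  have h2 : ContinuousOn (fun p => Wf n p ^ (-((n:ℝ)/2))) (closedHalf n) :=
    cont_W.continuousOn.rpow_const fun p hp => Or.inl (Wf_pos hp).ne'
  fun_prop

lemma Dir.cont_D2 (h : Dir n e l) : ContinuousOn (D2 n l) (closedHalf n) := by
  unfold D2
  have h1 := h.cl.continuousOn (s := closedHalf n)
  have h2 : ContinuousOn (fun p => Wf n p ^ (-((n:ℝ)/2))) (closedHalf n) :=
    cont_W.continuousOn.rpow_const fun p hp => Or.inl (Wf_pos hp).ne'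
  have h3 : ContinuousOn (fun p => Wf n p ^ (-((n:ℝ)/2)-1)) (closedHalf n) :=
    cont_W.continuousOn.rpow_const fun p hp => Or.inl (Wf_pos hp).ne'
  fun_prop

lemma Dir.bd_D1 (h : Dir n e l) : ∃ K, 0 ≤ K ∧ ∀ p ∈ closedHalf n,
    |D1 n l p| ≤ K * (1 + ‖p‖) ^ ((1:ℝ) - n) := by
  refine ⟨|(n:ℝ)-2| * 2 ^ ((n:ℝ)/2), by positivity, fun p hp => ?_⟩
  have h0 : 0 < 1 + ‖p‖ := by positivity
  have hw := (Real.rpow_pos_of_pos (Wf_pos hp) (-((n:ℝ)/2))).le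
  rw [D1, abs_mul, abs_mul, abs_neg, abs_of_nonneg hw, mul_assoc]
  refine mul_le_mul_of_nonneg_left ?_ (abs_nonneg _)
  calc _ ≤ (1+‖p‖) * (2 ^ ((n:ℝ)/2) * (1+‖p‖)^(-(2*((n:ℝ)/2)))) := by
        gcongr
        · exact h.bl p
        · exact Wf_rpow_le hp (by positivity)
    _ = _ := by
        rw [show (1:ℝ) - n = 1 + (-(2*((n:ℝ)/2))) by ring, Real.rpow_add h0, Real.rpow_one]; ring

lemma Dir.bd_D2 (h : Dir n e l) : ∃ K, 0 ≤ K ∧ ∀ p ∈ closedHalf n,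
    |D2 n l p| ≤ K * (1 + ‖p‖) ^ (-(n:ℝ)) := by
  refine ⟨|(n:ℝ)-2| * (2 ^ ((n:ℝ)/2) + n * 2 ^ ((n:ℝ)/2+1)), by positivity, fun p hp => ?_⟩
  have h0 : 0 < 1 + ‖p‖ := by positivity
  have hw := (Real.rpow_pos_of_pos (Wf_pos hp) (-((n:ℝ)/2))).le
  have hw' := (Real.rpow_pos_of_pos (Wf_pos hp) (-((n:ℝ)/2)-1)).le
  rw [D2, abs_mul, abs_neg, mul_assoc |(n:ℝ)-2|]
  refine mul_le_mul_of_nonneg_left ?_ (abs_nonneg _)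
  refine (abs_sub _ _).trans ?_
  rw [abs_of_nonneg hw, abs_mul, abs_mul, abs_of_nonneg hw', abs_pow, Nat.abs_cast, add_mul]
  refine add_le_add ?_ ?_
  · refine (Wf_rpow_le hp (by positivity)).trans (le_of_eq ?_)
    congr 2; ring
  · calc _ ≤ (n:ℝ) * (1+‖p‖)^2 * (2 ^ ((n:ℝ)/2+1) * (1+‖p‖)^(-(2*((n:ℝ)/2+1)))) := by
          gcongr
          · exact h.bl p
          · refine le_trans (le_of_eq ?_) (Wf_rpow_le hp (by positivity)); congr 1; ring
      _ = _ := by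
        rw [show (-(n:ℝ)) = 2 + (-(2*((n:ℝ)/2+1))) by ring, Real.rpow_add h0, Real.rpow_two]; ring
end

lemma harm (n : ℕ) (p : Pt n) (hn : 1 ≤ n) (hp : p ∈ closedHalf n) :
    (∑ i : Fin (n-1), D2 n (fun p => p.1 i) p) + D2 n (fun p => 1 + p.2) p = 0 := by
  have h1 : ∑ i : Fin (n-1), (p.1 i)^2 = ‖p.1‖^2 := (EuclideanSpace.real_norm_sq_eq _).symm
  have h2 : (Wf n p) ^ (-((n:ℝ)/2)) = Wf n p * (Wf n p) ^ (-((n:ℝ)/2) - 1) := by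
    rw [Real.rpow_sub_one (Wf_pos hp).ne']; field_simp [(Wf_pos hp).ne']
  simp only [D2, ← Finset.mul_sum, Finset.sum_sub_distrib, ← Finset.sum_mul, h1]
  simp only [Finset.sum_const, Finset.card_univ, Fintype.card_fin, nsmul_eq_mul]
  rw [h2, Nat.cast_sub hn]
  unfold Wf; push_cast; ring

lemma norm_le_nrm {n : ℕ} (p : Pt n) : ‖p‖ ≤ nrm n p := by
  unfold nrm
  refine Real.le_sqrt_of_sq_le ?_
  rcases max_choice ‖p.1‖ ‖p.2‖ with h1 | h1
  · rw [Prod.norm_def, h1]; nlinarith [sq_nonneg p.2]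
  · rw [Prod.norm_def, h1, Real.norm_eq_abs, sq_abs]; nlinarith [sq_nonneg ‖p.1‖]

lemma dec {n : ℕ} (p : Pt n) {a C : ℝ} (hC : 0 < C) (ha : a ≤ 0) :
    C * (1 + nrm n p) ^ a ≤ C * (1 + ‖p‖) ^ a := by
  refine mul_le_mul_of_nonneg_left ?_ hC.le
  exact Real.rpow_le_rpow_of_nonpos (by positivity) (by linarith [norm_le_nrm p]) ha

lemma upper_open (n : ℕ) : IsOpen (upperHalf n) := isOpen_lt continuous_const continuous_snd

lemma upper_sub (n : ℕ) : upperHalf n ⊆ closedHalf n := fun p (hp : 0 < p.2) => (hp.le : 0 ≤ p.2)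

lemma closed_nhds {n : ℕ} {p : Pt n} (hp : p ∈ upperHalf n) : closedHalf n ∈ nhds p :=
  Filter.mem_of_superset ((upper_open n).mem_nhds hp) (upper_sub n)

lemma upper_eq (n : ℕ) : upperHalf n = Set.univ ×ˢ Set.Ioi (0:ℝ) := by
  ext p; simp [upperHalf]

lemma restr (n : ℕ) : (volume : Measure (Pt n)).restrict (upperHalf n) =
    (volume : Measure (EuclideanSpace ℝ (Fin (n-1)))).prod (volume.restrict (Set.Ioi (0:ℝ))) := by
  rw [upper_eq, Measure.volume_eq_prod, ← Measure.prod_restrict, Measure.restrict_univ]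

lemma intU {n : ℕ} (hn : 5 ≤ n) {F : Pt n → ℝ} (hF : ContinuousOn F (upperHalf n)) {K : ℝ}
    (hb : ∀ p ∈ upperHalf n, |F p| ≤ K * (1 + ‖p‖) ^ ((4:ℝ) - 2 * n)) :
    IntegrableOn F (upperHalf n) := by
  have hn' : (5:ℝ) ≤ n := by exact_mod_cast hn
  have h1 : Integrable (fun p : Pt n => (1 + ‖p‖) ^ (-((2:ℝ) * n - 4))) := by
    have : (volume : Measure (Pt n)).IsAddHaarMeasure :=
      Measure.prod.instIsAddHaarMeasure volume volume
    apply integrable_one_add_norm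
    have : Module.finrank ℝ (Pt n) = n := by simp; omega
    rw [this]; linarith
  rw [neg_sub] at h1
  refine Integrable.mono' ((h1.const_mul K).integrableOn)
    (hF.aestronglyMeasurable (upper_open n).measurableSet) ?_
  exact (ae_restrict_iff' (upper_open n).measurableSet).2 (Filter.Eventually.of_forall hb)

lemma intS {n : ℕ} (hn : 5 ≤ n) {F : Pt n → ℝ} (hF : ContinuousOn F (upperHalf n)) {K : ℝ}
    (hK : 0 ≤ K)
    (hb : ∀ p ∈ upperHalf n, |F p| ≤ K * (1 + ‖p‖) ^ ((5:ℝ) - 2 * n)) {t : ℝ} (ht : 0 < t) :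
    Integrable (fun z => F (z, t)) := by
  have hn' : (5:ℝ) ≤ n := by exact_mod_cast hn
  have h1 : Integrable (fun p : EuclideanSpace ℝ (Fin (n-1)) => (1 + ‖p‖) ^ (-((2:ℝ) * n - 5))) := by
    apply integrable_one_add_norm
    simp
    rw [Nat.cast_sub (by omega)]; push_cast; linarith
  rw [neg_sub] at h1
  have hm : ∀ z, (z, t) ∈ upperHalf n := fun z => ht
  have hc : Continuous (fun z => F (z, t)) := by
    rw [← continuousOn_univ]
    exact hF.comp (by fun_prop) (fun z _ => hm z)
  refine Integrable.mono' (h1.const_mul K) hc.aestronglyMeasurable ?_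
  refine Filter.Eventually.of_forall fun z => (hb _ (hm z)).trans ?_
  refine mul_le_mul_of_nonneg_left ?_ hK
  refine Real.rpow_le_rpow_of_nonpos (by positivity) ?_ (by linarith)
  have := norm_fst_le (z, t)
  simp only at this ⊢; linarith

lemma weaken {n : ℕ} {F : Pt n → ℝ} {K : ℝ} (hK : 0 ≤ K)
    (hb : ∀ p ∈ upperHalf n, |F p| ≤ K * (1 + ‖p‖) ^ ((4:ℝ) - 2 * n)) :
    ∀ p ∈ upperHalf n, |F p| ≤ K * (1 + ‖p‖) ^ ((5:ℝ) - 2 * n) := by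
  refine fun p hp => (hb p hp).trans (mul_le_mul_of_nonneg_left ?_ hK)
  exact Real.rpow_le_rpow_of_exponent_le (by linarith [norm_nonneg p]) (by linarith)

lemma mulbd {x y A B N a b c : ℝ} (hN : 0 < N) (hA : 0 ≤ A) (hx : |x| ≤ A * N ^ a)
    (hy : |y| ≤ B * N ^ b) (hc : a + b = c) :
    |x * y| ≤ (A * B) * N ^ c := by
  rw [abs_mul]
  calc _ ≤ (A * N^a) * (B * N^b) := by gcongr
    _ = _ := by rw [← hc, Real.rpow_add hN]; ring

/-- data on v -/
structure VD (n : ℕ) (C : ℝ) (v : Pt n → ℝ) : Prop where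
  hC : 0 < C
  cv : ContinuousOn v (closedHalf n)
  dv : ∀ p ∈ upperHalf n, DifferentiableAt ℝ v p
  cdv : ∀ e, ContinuousOn (pd e v) (upperHalf n)
  bv : ∀ p ∈ closedHalf n, |v p| ≤ C * (1 + ‖p‖) ^ ((4 : ℝ) - (n : ℝ))
  bdv : ∀ e, ‖e‖ ≤ 1 → ∀ p ∈ upperHalf n, |pd e v p| ≤ C * (1 + ‖p‖) ^ ((3 : ℝ) - (n : ℝ))

lemma mkVD (n : ℕ) (hn : 5 ≤ n) (C : ℝ) (hC : 0 < C) (v : Pt n → ℝ)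
    (hreg : ContDiffOn ℝ 1 v (closedHalf n))
    (hv : ∀ p ∈ closedHalf n, |v p| ≤ C * (1 + nrm n p) ^ ((4 : ℝ) - (n : ℝ)))
    (hdv : ∀ p ∈ closedHalf n,
      ‖iteratedFDerivWithin ℝ 1 v (closedHalf n) p‖ ≤
        C * (1 + nrm n p) ^ ((3 : ℝ) - (n : ℝ))) : VD n C v where
  hC := hC
  cv := hreg.continuousOn
  dv p hp := (hreg.contDiffAt (closed_nhds hp)).differentiableAt (by norm_num)
  cdv e := by
    have := (hreg.mono (upper_sub n)).continuousOn_fderiv_of_isOpen (upper_open n) le_rfl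
    unfold pd
    fun_prop
  bv p hp := (hv p hp).trans (dec p hC (by
    have hn' : (5:ℝ) ≤ n := by exact_mod_cast hn
    linarith))
  bdv e he p hp := by
    have hn' : (5:ℝ) ≤ n := by exact_mod_cast hn
    have h1 := (hdv p (upper_sub n hp)).trans (dec p hC (by linarith))
    rw [norm_iteratedFDerivWithin_one _ (uniqueDiffWithinAt_of_mem_nhds (closed_nhds hp)),
      fderivWithin_of_mem_nhds (closed_nhds hp)] at h1
    refine le_trans ?_ h1
    unfold pd
    rw [← Real.norm_eq_abs]
    exact (fderiv ℝ v p).le_of_opNorm_le_of_le le_rfl he |>.trans (by simp)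

section
variable {n : ℕ} {e : Pt n} {l : Pt n → ℝ} {C : ℝ} {v : Pt n → ℝ}

lemma VD.b1 (V : VD n C v) (h : Dir n e l) : ∃ K, 0 ≤ K ∧ ∀ p ∈ upperHalf n,
    |D1 n l p * pd e v p| ≤ K * (1 + ‖p‖) ^ ((4:ℝ) - 2 * n) := by
  obtain ⟨K, hK, hb⟩ := h.bd_D1
  exact ⟨K * C, mul_nonneg hK V.hC.le, fun p hp => mulbd (by positivity) hK (hb p (upper_sub n hp))
    (V.bdv e h.ne p hp) (by ring)⟩

lemma VD.b2 (V : VD n C v) (h : Dir n e l) : ∃ K, 0 ≤ K ∧ ∀ p ∈ upperHalf n,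
    |D2 n l p * v p| ≤ K * (1 + ‖p‖) ^ ((4:ℝ) - 2 * n) := by
  obtain ⟨K, hK, hb⟩ := h.bd_D2
  exact ⟨K * C, mul_nonneg hK V.hC.le, fun p hp => mulbd (by positivity) hK (hb p (upper_sub n hp))
    (V.bv p (upper_sub n hp)) (by ring)⟩

lemma VD.b3 (V : VD n C v) (h : Dir n e l) : ∃ K, 0 ≤ K ∧ ∀ p ∈ upperHalf n,
    |D1 n l p * v p| ≤ K * (1 + ‖p‖) ^ ((5:ℝ) - 2 * n) := by
  obtain ⟨K, hK, hb⟩ := h.bd_D1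
  exact ⟨K * C, mul_nonneg hK V.hC.le, fun p hp => mulbd (by positivity) hK (hb p (upper_sub n hp))
    (V.bv p (upper_sub n hp)) (by ring)⟩

lemma VD.c1 (V : VD n C v) (h : Dir n e l) :
    ContinuousOn (fun p => D1 n l p * pd e v p) (upperHalf n) :=
  (h.cont_D1.mono (upper_sub n)).mul (V.cdv e)

lemma VD.c2 (V : VD n C v) (h : Dir n e l) :
    ContinuousOn (fun p => D2 n l p * v p) (upperHalf n) :=
  (h.cont_D2.mono (upper_sub n)).mul (V.cv.mono (upper_sub n))

lemma VD.c3 (V : VD n C v) (h : Dir n e l) :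
    ContinuousOn (fun p => D1 n l p * v p) (upperHalf n) :=
  (h.cont_D1.mono (upper_sub n)).mul (V.cv.mono (upper_sub n))

lemma VD.i1 (V : VD n C v) (hn : 5 ≤ n) (h : Dir n e l) :
    IntegrableOn (fun p => D1 n l p * pd e v p) (upperHalf n) := by
  obtain ⟨K, _, hb⟩ := V.b1 h
  exact intU hn (V.c1 h) hb

lemma VD.i2 (V : VD n C v) (hn : 5 ≤ n) (h : Dir n e l) :
    IntegrableOn (fun p => D2 n l p * v p) (upperHalf n) := by
  obtain ⟨K, _, hb⟩ := V.b2 h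
  exact intU hn (V.c2 h) hb

lemma VD.line (V : VD n C v) (e : Pt n) {p : Pt n} (hp : p ∈ upperHalf n) :
    HasLineDerivAt ℝ v (pd e v p) p e :=
  (V.dv p hp).hasFDerivAt.hasLineDerivAt e

lemma horiz {f : Pt n → ℝ} {f' : ℝ} {i : Fin (n-1)} {z : EuclideanSpace ℝ (Fin (n-1))} {t : ℝ}
    (h : HasLineDerivAt ℝ f f' (z, t) (ez n i)) :
    HasLineDerivAt ℝ (fun z => f (z, t)) f' z (EuclideanSpace.single i 1) := by
  unfold HasLineDerivAt at *
  simpa [ez] using h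

lemma vert {f : Pt n → ℝ} {f' : ℝ} {z : EuclideanSpace ℝ (Fin (n-1))} {t : ℝ}
    (h : HasLineDerivAt ℝ f f' (z, t) (et n)) :
    HasDerivAt (fun t => f (z, t)) f' t := by
  unfold HasLineDerivAt at h
  have h2 : HasDerivAt (fun s : ℝ => s - t) 1 t := (hasDerivAt_id t).sub_const t
  have := HasDerivAt.comp_of_eq t h h2 (by simp)
  simpa [et, Function.comp_def] using this

lemma VD.hor (V : VD n C v) (hn : 5 ≤ n) (i : Fin (n-1)) :
    ∫ p in upperHalf n, D1 n (fun p => p.1 i) p * pd (ez n i) v p =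
      - ∫ p in upperHalf n, D2 n (fun p => p.1 i) p * v p := by
  have h := dir_ez n i
  have I1 := V.i1 hn h
  have I2 := V.i2 hn h
  unfold IntegrableOn at I1 I2
  rw [restr] at *
  rw [integral_prod_symm _ I1, integral_prod_symm _ I2, ← integral_neg]
  refine setIntegral_congr_fun measurableSet_Ioi fun t (ht : 0 < t) => ?_
  have hm : ∀ z, (z, t) ∈ upperHalf n := fun z => ht
  obtain ⟨K1, hK1, hb1⟩ := V.b1 h
  obtain ⟨K2, hK2, hb2⟩ := V.b2 h
  obtain ⟨K3, hK3, hb3⟩ := V.b3 h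
  have J1 := intS hn (V.c1 h) hK1 (weaken hK1 hb1) ht
  have J2 := intS hn (V.c2 h) hK2 (weaken hK2 hb2) ht
  have J3 := intS hn (V.c3 h) hK3 hb3 ht
  exact integral_bilinear_hasLineDerivAt_right_eq_neg_left_of_integrable
    (B := ContinuousLinearMap.mul ℝ ℝ) (μ := volume)
    (f := fun z => D1 n (fun p => p.1 i) (z, t)) (g := fun z => v (z, t))
    (f' := fun z => D2 n (fun p => p.1 i) (z, t)) (g' := fun z => pd (ez n i) v (z, t))
    (v := EuclideanSpace.single i 1) J2 J1 J3
    (fun z _ => horiz (h.line_D1 (upper_sub n (hm z)))) (fun z _ => horiz (V.line _ (hm z)))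

lemma VD.ver (V : VD n C v) (hn : 5 ≤ n) :
    ∫ p in upperHalf n, (D2 n (fun p => 1 + p.2) p * v p +
      D1 n (fun p => 1 + p.2) p * pd (et n) v p) =
      ∫ z : EuclideanSpace ℝ (Fin (n-1)), -(D1 n (fun p => 1 + p.2) (z, 0) * v (z, 0)) := by
  have hn' : (5:ℝ) ≤ n := by exact_mod_cast hn
  have h := dir_et n
  have I : Integrable (fun p => D2 n (fun p => 1 + p.2) p * v p +
      D1 n (fun p => 1 + p.2) p * pd (et n) v p) (volume.restrict (upperHalf n)) :=
    (V.i2 hn h).add (V.i1 hn h)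
  rw [restr] at *
  rw [integral_prod _ I]
  refine integral_congr_ae ?_
  filter_upwards [I.prod_right_ae] with z hz
  have hm : ∀ t : ℝ, 0 < t → (z, t) ∈ upperHalf n := fun t ht => ht
  obtain ⟨K3, hK3, hb3⟩ := V.b3 h
  rw [integral_Ioi_of_hasDerivAt_of_tendsto (a := 0) (m := 0)
    (f := fun t => D1 n (fun p => 1 + p.2) (z, t) * v (z, t)) ?_ ?_ hz ?_]
  · simp
  · have : ContinuousOn (fun p => D1 n (fun p => 1 + p.2) p * v p) (closedHalf n) :=
      h.cont_D1.mul V.cv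
    have h2 : ContinuousOn (fun t : ℝ => D1 n (fun p => 1 + p.2) (z, t) * v (z, t)) (Set.Ici 0) :=
      this.comp (by fun_prop) (fun t ht => ht)
    exact h2 0 Set.self_mem_Ici
  · intro t ht
    exact (vert (h.line_D1 (upper_sub n (hm t ht)))).mul (vert (V.line _ (hm t ht)))
  · have ht : Filter.Tendsto (fun t : ℝ => K3 * (1 + t) ^ (-((2:ℝ) * n - 5))) Filter.atTop (nhds 0) := by
      have := ((tendsto_rpow_neg_atTop (y := (2:ℝ) * n - 5) (by linarith)).comp
        (Filter.tendsto_atTop_add_const_left _ (1:ℝ) Filter.tendsto_id)).const_mul K3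
      simpa using this
    refine squeeze_zero_norm' ?_ ht
    filter_upwards [Filter.eventually_gt_atTop 0] with t ht
    refine (hb3 _ (hm t ht)).trans (mul_le_mul_of_nonneg_left ?_ hK3)
    rw [neg_sub]
    refine Real.rpow_le_rpow_of_nonpos (by positivity) ?_ (by linarith)
    have := norm_snd_le (z, t)
    simp only [Real.norm_eq_abs] at this
    linarith [le_abs_self t]

lemma bdry (hn : 5 ≤ n) (z : EuclideanSpace ℝ (Fin (n-1))) :
    -(D1 n (fun p => 1 + p.2) (z, 0)) =
      ((n:ℝ)-2) * (stdBubble n (z, 0)) ^ ((n : ℝ) / ((n : ℝ) - 2)) := by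
  have hn' : (5:ℝ) ≤ n := by exact_mod_cast hn
  have h0 : (n:ℝ) - 2 ≠ 0 := by linarith
  unfold D1 stdBubble Wf
  rw [← Real.rpow_mul (by positivity)]
  rw [show -(((n:ℝ) - 2)/2) * ((n : ℝ) / ((n : ℝ) - 2)) = -((n:ℝ)/2) by field_simp]
  simp
  ring
end

/-- for a decaying `C¹` function `v` on the closed half-space,
`∫_{ℝ^n_+} ∇U·∇v = (n-2) ∫_{ℝ^{n-1}} U(z,0)^{n/(n-2)} v(z,0) dz`; in particular
the left side vanishes when the boundary integral does. -/
theorem stmt11 (n : ℕ) (hn : 5 ≤ n) (C : ℝ) (hC : 0 < C) (v : Pt n → ℝ)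
    (hreg : ContDiffOn ℝ 1 v (closedHalf n))
    (hv : ∀ p ∈ closedHalf n, |v p| ≤ C * (1 + nrm n p) ^ ((4 : ℝ) - (n : ℝ)))
    (hdv : ∀ p ∈ closedHalf n,
      ‖iteratedFDerivWithin ℝ 1 v (closedHalf n) p‖ ≤
        C * (1 + nrm n p) ^ ((3 : ℝ) - (n : ℝ))) :
    (∫ p in upperHalf n,
        ((∑ i : Fin (n - 1), pd (ez n i) (stdBubble n) p * pd (ez n i) v p) +
          pd (et n) (stdBubble n) p * pd (et n) v p)) =
      ((n : ℝ) - 2) *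
        ∫ z : EuclideanSpace ℝ (Fin (n - 1)),
          (stdBubble n (z, 0)) ^ ((n : ℝ) / ((n : ℝ) - 2)) * v (z, 0) ∧
    ((∫ z : EuclideanSpace ℝ (Fin (n - 1)),
        (stdBubble n (z, 0)) ^ ((n : ℝ) / ((n : ℝ) - 2)) * v (z, 0)) = 0 →
      (∫ p in upperHalf n,
        ((∑ i : Fin (n - 1), pd (ez n i) (stdBubble n) p * pd (ez n i) v p) +
          pd (et n) (stdBubble n) p * pd (et n) v p)) = 0) := by
  have V := mkVD n hn C hC v hreg hv hdv
  have key : (∫ p in upperHalf n,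
        ((∑ i : Fin (n - 1), pd (ez n i) (stdBubble n) p * pd (ez n i) v p) +
          pd (et n) (stdBubble n) p * pd (et n) v p)) =
      ((n : ℝ) - 2) *
        ∫ z : EuclideanSpace ℝ (Fin (n - 1)),
          (stdBubble n (z, 0)) ^ ((n : ℝ) / ((n : ℝ) - 2)) * v (z, 0) := by
    have e1 : (∫ p in upperHalf n,
        ((∑ i : Fin (n - 1), pd (ez n i) (stdBubble n) p * pd (ez n i) v p) +
          pd (et n) (stdBubble n) p * pd (et n) v p)) =
        ∫ p in upperHalf n,
        ((∑ i : Fin (n - 1), D1 n (fun p => p.1 i) p * pd (ez n i) v p) +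
          D1 n (fun p => 1 + p.2) p * pd (et n) v p) := by
      refine setIntegral_congr_fun (upper_open n).measurableSet fun p hp => ?_
      have hp' := upper_sub n hp
      simp only [(dir_et n).pd_U hp', fun i => (dir_ez n i).pd_U hp']
    have e2 : ∫ p in upperHalf n, D2 n (fun p => 1 + p.2) p * v p =
        -∑ i : Fin (n - 1), ∫ p in upperHalf n, D2 n (fun p => p.1 i) p * v p := by
      rw [← integral_finsetSum _ (fun i _ => V.i2 hn (dir_ez n i)), ← integral_neg]
      refine setIntegral_congr_fun (upper_open n).measurableSet fun p hp => ?_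
      have := harm n p (by omega) (upper_sub n hp)
      simp only [← Finset.sum_mul]
      linear_combination v p * this
    have e3 := V.ver hn
    rw [integral_add (V.i2 hn (dir_et n)) (V.i1 hn (dir_et n)), e2] at e3
    rw [e1, integral_add (integrable_finsetSum _ fun i _ => V.i1 hn (dir_ez n i))
      (V.i1 hn (dir_et n)), integral_finsetSum _ (fun i _ => V.i1 hn (dir_ez n i))]
    simp only [V.hor hn, Finset.sum_neg_distrib]
    rw [e3, ← integral_const_mul]
    refine integral_congr_ae (Filter.Eventually.of_forall fun z => ?_)
    simp only
    rw [← neg_mul, bdry hn, mul_assoc]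
  exact ⟨key, fun h => by rw [key, h, mul_zero]⟩
end
end
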